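/- As the real variable x tends to 0, (1/16)·∑_{n=0}^∞ 2^{−6(n+x)} · [ (1/2)_{n+x} / (1)_{n+x} ]³ · (42(n+x)+5) = 1/π − 3π x² + 64 G x³ + O(x⁴), where G is Catalan's constant; in particular the coefficients of x⁰, x¹, x², x³ in the expansion are 1/π, 0, −3π, 64G respectively. -/

import Mathlib

/-- The Pochhammer symbol for real index: `(a)_t = Γ(a+t)/Γ(a)`. -/
noncomputable def pochG (a t : ℝ) : ℝ := Real.Gamma (a + t) / Real.Gamma a

/-- Catalan's constant `G = ∑_{n≥0} (-1)^n/(2n+1)²`. -/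
noncomputable def catalan' : ℝ := ∑' n : ℕ, (-1 : ℝ) ^ n / (2 * (n : ℝ) + 1) ^ 2

/-!
Put `B(v, v) = Γ(v)² / Γ(2v)` and `h = 1/2 + x`. By the duplication formula the series is
`(8π³)⁻¹ ∑ (21 v - 8) B(v, v)³` over `v ∈ h + ℕ`. Contiguous relations between the sums
`∑_{j ≥ 0} Γ(a+j) Γ(b+j) / (Γ(c+j) Γ(d+j))` show that the summand is a difference of
`v ↦ 8 (2v-1) Γ(v)⁴ / Γ(2v) · ∑_j Γ(v+j)² / Γ(2v+j)²`, so the series telescopes to the value of this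
function at `h`.

That value is found by extending the sum over `j` to the left one term at a time, each extension
being again a contiguous relation. In the limit Gauss's summation theorem applies and produces
`8π² cos(3πx) / cos³(πx)`, which accounts for `1/π - 3πx²`; the corrections add up to `x³` times a
factor tending to a multiple of `∑_j Γ(1/2+j) Γ(1+j) / Γ(3/2+j)²`, that is, of Catalan's constant,
as interchanging a double sum shows.

Gauss's theorem is available only for `x > 0`. Since the series is analytic at `0`, the one-sided
limit of its third-order quotient already yields the two-sided error term `O(x⁴)`.
-/

open Filter Topology Asymptotics

variable {a b c d : ℝ}

/-! ### Gamma quotients -/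

theorem tsum_eq_sub_of_forall_eq_sub {f g : ℕ → ℝ} {l : ℝ} (hf : Summable f)
    (hfg : ∀ n, f n = g n - g (n + 1)) (hg : Tendsto g atTop (𝓝 l)) : ∑' n, f n = g 0 - l := by
  refine tendsto_nhds_unique hf.hasSum.tendsto_sum_nat ?_
  simp_rw [hfg, Finset.sum_range_sub']
  exact tendsto_const_nhds.sub hg

theorem Gamma_eq_Gamma_add_one_div (s : ℝ) : Real.Gamma s = Real.Gamma (s + 1) / s := by
  rcases eq_or_ne s 0 with rfl | hs
  · simp [Real.Gamma_zero]
  · rw [Real.Gamma_add_one hs, mul_div_cancel_left₀ _ hs]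

/-- The sequence `n ↦ Γ(a + n) / Γ(b + n)`. At a pole of the denominator `Real.Gamma` takes the
value `0`, hence so does the ratio, in agreement with the entire function `1 / Γ`. -/
noncomputable def gammaRatio (a b : ℝ) (n : ℕ) : ℝ := Real.Gamma (a + n) / Real.Gamma (b + n)

theorem gammaRatio_add (a b : ℝ) (m n : ℕ) :
    gammaRatio a b (m + n) = gammaRatio (a + m) (b + m) n := by
  simp only [gammaRatio, Nat.cast_add, add_assoc]

theorem gammaRatio_pos (ha : 0 < a) (hb : 0 < b) (n : ℕ) : 0 < gammaRatio a b n :=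
  div_pos (Real.Gamma_pos_of_pos (by positivity)) (Real.Gamma_pos_of_pos (by positivity))

theorem gammaRatio_eq_mul_gammaRatio_add_one_right (a b : ℝ) (n : ℕ) :
    gammaRatio a b n = (b + n) * gammaRatio a (b + 1) n := by
  rw [gammaRatio, gammaRatio, Gamma_eq_Gamma_add_one_div (b + n), add_right_comm,
    div_div_eq_mul_div, mul_comm, mul_div_assoc]

theorem gammaRatio_add_one_left (b : ℝ) {n : ℕ} (ha : a + n ≠ 0) :
    gammaRatio (a + 1) b n = (a + n) * gammaRatio a b n := by
  rw [gammaRatio, gammaRatio, add_right_comm, Real.Gamma_add_one ha, mul_div_assoc]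

theorem gammaRatio_succ {n : ℕ} (ha : a + n ≠ 0) (hb : b + n ≠ 0) :
    gammaRatio a b (n + 1) = (a + n) / (b + n) * gammaRatio a b n := by
  rw [gammaRatio, gammaRatio, Nat.cast_succ, ← add_assoc, ← add_assoc, Real.Gamma_add_one ha,
    Real.Gamma_add_one hb, mul_div_mul_comm]

theorem gammaRatio_eq_mul_prod (ha : ∀ m : ℕ, a ≠ -m) (hb : ∀ m : ℕ, b ≠ -m) (n : ℕ) :
    gammaRatio a b n = gammaRatio a b 0 * ∏ i ∈ Finset.range n, (a + i) / (b + i) := by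
  induction n with
  | zero => simp
  | succ n ih =>
    rw [gammaRatio_succ (mt eq_neg_of_add_eq_zero_left (ha n))
      (mt eq_neg_of_add_eq_zero_left (hb n)), ih, Finset.prod_range_succ]
    ring

theorem ne_neg_natCast_of_pos (ha : 0 < a) (m : ℕ) : a ≠ -m :=
  (neg_nonpos.2 m.cast_nonneg |>.trans_lt ha).ne'

theorem gammaRatio_div_gammaRatio_zero_le (ha : 0 < a) (hac : a ≤ c) (hd : 0 < d) (hdb : d ≤ b)
    (n : ℕ) : gammaRatio a b n / gammaRatio a b 0 ≤ gammaRatio c d n / gammaRatio c d 0 := by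
  have hb := hd.trans_le hdb
  have hc := ha.trans_le hac
  rw [gammaRatio_eq_mul_prod (ne_neg_natCast_of_pos ha) (ne_neg_natCast_of_pos hb),
    gammaRatio_eq_mul_prod (ne_neg_natCast_of_pos hc) (ne_neg_natCast_of_pos hd),
    mul_div_cancel_left₀ _ (gammaRatio_pos ha hb 0).ne',
    mul_div_cancel_left₀ _ (gammaRatio_pos hc hd 0).ne']
  exact Finset.prod_le_prod (fun i _ => by positivity) fun i _ => by gcongr

theorem gammaRatio_le_gammaRatio_zero (ha : 0 < a) (hab : a ≤ b) (n : ℕ) :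
    gammaRatio a b n ≤ gammaRatio a b 0 := by
  have hb := ha.trans_le hab
  have hself (m : ℕ) : gammaRatio b b m = 1 := div_self (Real.Gamma_pos_of_pos (by positivity)).ne'
  have := gammaRatio_div_gammaRatio_zero_le ha hab hb le_rfl n
  rwa [hself, hself, div_one, div_le_one (gammaRatio_pos ha hb 0)] at this

theorem tendsto_gammaRatio_div_rpow_of_pos (ha : 0 < a) (hb : 0 < b) :
    Tendsto (fun n : ℕ => gammaRatio a b n / ((n : ℝ) + 1) ^ (a - b)) atTop (𝓝 1) := by
  have hΓa := (Real.Gamma_pos_of_pos ha).ne'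
  have hΓb := (Real.Gamma_pos_of_pos hb).ne'
  have hseq := ((Real.GammaSeq_tendsto_Gamma b).div (Real.GammaSeq_tendsto_Gamma a) hΓa).const_mul
    (Real.Gamma a / Real.Gamma b)
  rw [div_mul_div_cancel₀ hΓb, div_self hΓa] at hseq
  have hshift : Tendsto (fun n : ℕ => ((n : ℝ) / (n + 1)) ^ (a - b)) atTop (𝓝 1) := by
    simpa using (tendsto_natCast_div_add_atTop (1 : ℝ)).rpow_const (p := a - b) (.inl one_ne_zero)
  have hquot : Tendsto (fun n : ℕ => (b + n) / (a + n)) atTop (𝓝 1) := by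
    simpa [add_comm] using tendsto_add_mul_div_add_mul_atTop_nhds b a (1 : ℝ) one_ne_zero
  have := (hseq.mul hshift).mul hquot
  rw [mul_one, mul_one] at this
  refine this.congr' ?_
  filter_upwards [eventually_gt_atTop 0] with n hn
  have hn : (0 : ℝ) < n := by exact_mod_cast hn
  have hprod : ∀ s : ℝ, 0 < s → ∏ i ∈ Finset.range n, (s + i) ≠ 0 := fun s hs =>
    (Finset.prod_pos fun i _ => by positivity).ne'
  rw [gammaRatio_eq_mul_prod (ne_neg_natCast_of_pos ha) (ne_neg_natCast_of_pos hb),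
    Finset.prod_div_distrib, Pi.div_apply, Real.GammaSeq, Real.GammaSeq, Finset.prod_range_succ,
    Finset.prod_range_succ, Real.div_rpow hn.le (by positivity), Real.rpow_sub hn, gammaRatio]
  have := hprod a ha
  have := hprod b hb
  have := n.factorial_ne_zero
  have := (Real.rpow_pos_of_pos hn a).ne'
  have := (Real.rpow_pos_of_pos hn b).ne'
  simp only [Nat.cast_zero, add_zero]
  field_simp

theorem isEquivalent_gammaRatio (a b : ℝ) :
    gammaRatio a b ~[atTop] fun n => ((n : ℝ) + 1) ^ (a - b) := by
  rw [isEquivalent_iff_tendsto_one (.of_forall fun n => by positivity)]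
  obtain ⟨m, hm⟩ := exists_nat_gt (max (-a) (-b))
  obtain ⟨hma, hmb⟩ := max_lt_iff.1 hm
  rw [← tendsto_add_atTop_iff_nat m]
  have hpos := tendsto_gammaRatio_div_rpow_of_pos (neg_lt_iff_pos_add'.1 hma)
    (neg_lt_iff_pos_add'.1 hmb)
  have hshift : Tendsto (fun n : ℕ => (((n : ℝ) + 1) / (n + (m + 1))) ^ (a - b)) atTop (𝓝 1) := by
    have := tendsto_add_mul_div_add_mul_atTop_nhds (1 : ℝ) (m + 1) 1 one_ne_zero
    simpa [add_comm, one_mul] using this.rpow_const (p := a - b) (.inl (by simp))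
  have := hpos.mul hshift
  rw [mul_one] at this
  refine this.congr fun n => ?_
  rw [Real.div_rpow (by positivity) (by positivity), add_comm n m, Pi.div_apply, gammaRatio_add,
    add_sub_add_right_eq_sub, div_mul_div_cancel₀ (by positivity)]
  push_cast
  ring_nf

theorem gammaRatio_isBigO_rpow (a b : ℝ) :
    gammaRatio a b =O[atTop] fun n => ((n : ℝ) + 1) ^ (a - b) :=
  (isEquivalent_gammaRatio a b).isBigO

theorem exists_forall_abs_le_of_isBigO_rpow {u : ℕ → ℝ} {s : ℝ}
    (hu : u =O[atTop] fun n => ((n : ℝ) + 1) ^ s) :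
    ∃ C, 0 < C ∧ ∀ n, |u n| ≤ C * ((n : ℝ) + 1) ^ s := by
  obtain ⟨C, hC, h⟩ := bound_of_isBigO_nat_atTop hu
  refine ⟨C, hC, fun n => ?_⟩
  have hn : 0 < ((n : ℝ) + 1) ^ s := by positivity
  simpa [abs_of_pos hn] using h hn.ne'

theorem summable_add_one_rpow {s : ℝ} (hs : s < -1) : Summable fun n : ℕ => ((n : ℝ) + 1) ^ s := by
  simpa using (summable_nat_add_iff 1).2 (Real.summable_nat_rpow.2 hs)

theorem tendsto_add_one_rpow {s : ℝ} (hs : s < 0) :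
    Tendsto (fun n : ℕ => ((n : ℝ) + 1) ^ s) atTop (𝓝 0) := by
  simpa [Function.comp_def] using (tendsto_rpow_neg_atTop (neg_pos.2 hs)).comp
    (tendsto_natCast_atTop_atTop.atTop_add (tendsto_const_nhds (x := (1 : ℝ))))

/-! ### Unilateral Dougall sums -/

/-- The summand `Γ(a + j) Γ(b + j) / (Γ(c + j) Γ(d + j))` of Dougall's bilateral series `₂H₂` at
`1`. -/
noncomputable def dougallTerm (a b c d : ℝ) (j : ℕ) : ℝ := gammaRatio a c j * gammaRatio b d j

theorem dougallTerm_comm_left (a b c d : ℝ) (j : ℕ) :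
    dougallTerm a b c d j = dougallTerm b a c d j := by
  simp only [dougallTerm, gammaRatio]
  ring

theorem dougallTerm_comm_right (a b c d : ℝ) (j : ℕ) :
    dougallTerm a b c d j = dougallTerm a b d c j := by
  simp only [dougallTerm, gammaRatio]
  ring

theorem dougallTerm_pos (ha : 0 < a) (hb : 0 < b) (hc : 0 < c) (hd : 0 < d) (j : ℕ) :
    0 < dougallTerm a b c d j :=
  mul_pos (gammaRatio_pos ha hc j) (gammaRatio_pos hb hd j)

theorem dougallTerm_add (a b c d : ℝ) (m j : ℕ) :
    dougallTerm a b c d (m + j) = dougallTerm (a + m) (b + m) (c + m) (d + m) j := by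
  simp only [dougallTerm, gammaRatio_add]

theorem dougallTerm_isBigO_rpow (a b c d : ℝ) :
    dougallTerm a b c d =O[atTop] fun n => ((n : ℝ) + 1) ^ (a + b - (c + d)) :=
  ((gammaRatio_isBigO_rpow a c).mul (gammaRatio_isBigO_rpow b d)).congr_right fun n => by
    rw [← Real.rpow_add (by positivity), sub_add_sub_comm]

theorem summable_dougallTerm (h : a + b + 1 < c + d) : Summable (dougallTerm a b c d) :=
  summable_of_isBigO_nat (summable_add_one_rpow (by linarith)) (dougallTerm_isBigO_rpow a b c d)

theorem tendsto_dougallTerm (h : a + b < c + d) : Tendsto (dougallTerm a b c d) atTop (𝓝 0) :=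
  (dougallTerm_isBigO_rpow a b c d).trans_tendsto (tendsto_add_one_rpow (by linarith))

theorem tendsto_dougallTerm_nhds_one (h : a + b = c + d) :
    Tendsto (dougallTerm a b c d) atTop (𝓝 1) := by
  have := (isEquivalent_gammaRatio a c).mul (isEquivalent_gammaRatio b d)
  refine this.tendsto_nhds_iff.2 (tendsto_const_nhds.congr fun n => ?_)
  rw [Pi.mul_apply, ← Real.rpow_add (by positivity), sub_add_sub_comm, h, sub_self, Real.rpow_zero]

theorem dougallTerm_sub_dougallTerm_succ {j : ℕ} (ha : a + j ≠ 0) (hb : b + j ≠ 0) :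
    dougallTerm a b c d j - dougallTerm a b c d (j + 1) =
      ((c + j) * (d + j) - (a + j) * (b + j)) * dougallTerm a b (c + 1) (d + 1) j := by
  have hsucc : dougallTerm a b c d (j + 1) = gammaRatio (a + 1) (c + 1) j *
      gammaRatio (b + 1) (d + 1) j := by
    rw [add_comm, dougallTerm_add, dougallTerm, Nat.cast_one]
  rw [hsucc, gammaRatio_add_one_left _ ha, gammaRatio_add_one_left _ hb, dougallTerm, dougallTerm,
    gammaRatio_eq_mul_gammaRatio_add_one_right a, gammaRatio_eq_mul_gammaRatio_add_one_right b]
  ring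

theorem isBigO_sub_of_sub_succ_isBigO {u : ℕ → ℝ} {l : ℝ} (hu : Tendsto u atTop (𝓝 l))
    (h : (fun n => u n - u (n + 1)) =O[atTop] fun n : ℕ => ((n : ℝ) + 1) ^ (-2 : ℝ)) :
    (fun n => u n - l) =O[atTop] fun n : ℕ => ((n : ℝ) + 1) ^ (-1 : ℝ) := by
  obtain ⟨C, hC, hb⟩ := exists_forall_abs_le_of_isBigO_rpow h
  have hstep (k : ℕ) : |u k - u (k + 1)| ≤ 2 * C / (k + 1) - 2 * C / (k + 1 + 1) := by
    refine (hb k).trans ?_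
    rw [Real.rpow_neg (by positivity), Real.rpow_two, div_sub_div _ _ (by positivity)
      (by positivity), ← div_eq_mul_inv, div_le_div_iff₀ (by positivity) (by positivity)]
    have : 0 ≤ C * ((k : ℝ) * (k + 1)) := by positivity
    linarith
  have hsum (n k : ℕ) : |u n - u (n + k)| ≤ 2 * C / (n + 1) - 2 * C / (n + k + 1) := by
    induction k with
    | zero => simp
    | succ k ih =>
      have := hstep (n + k)
      push_cast at this ⊢
      rw [← add_assoc, ← add_assoc]
      linarith [abs_sub_le (u n) (u (n + k)) (u (n + k + 1))]
  refine .of_bound (2 * C) (.of_forall fun n => ?_)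
  rw [Real.rpow_neg_one, Real.norm_of_nonneg (show (0 : ℝ) ≤ (n + 1 : ℝ)⁻¹ by positivity)]
  refine le_of_tendsto ((hu.comp (tendsto_add_atTop_nat n)).const_sub (u n)).norm
    (.of_forall fun k => ?_)
  have := hsum n k
  rw [Function.comp_apply, add_comm k n, Real.norm_eq_abs, ← div_eq_mul_inv]
  exact this.trans (sub_le_self _ (by positivity))

theorem eventually_add_natCast_pos (a : ℝ) : ∀ᶠ n : ℕ in atTop, 0 < a + n :=
  (tendsto_atTop_add_const_left _ a tendsto_natCast_atTop_atTop).eventually_gt_atTop 0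

theorem gammaRatio_sub_gammaRatio_isBigO_rpow (h : a + d = b + c) :
    (fun n => gammaRatio a b n - gammaRatio c d n) =O[atTop]
      fun n : ℕ => ((n : ℝ) + 1) ^ (a - b - 1) := by
  have hq := tendsto_dougallTerm_nhds_one h
  have hq' : (fun n => dougallTerm a d b c n - 1) =O[atTop]
      fun n : ℕ => ((n : ℝ) + 1) ^ (-1 : ℝ) := by
    have hterm := dougallTerm_isBigO_rpow a d (b + 1) (c + 1)
    rw [show a + d - (b + 1 + (c + 1)) = -2 by linarith] at hterm
    refine isBigO_sub_of_sub_succ_isBigO hq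
      ((hterm.const_mul_left (b * c - a * d)).congr' ?_ .rfl)
    filter_upwards [eventually_add_natCast_pos a, eventually_add_natCast_pos d] with n ha hd
    rw [dougallTerm_sub_dougallTerm_succ ha.ne' hd.ne']
    linear_combination n * h * dougallTerm a d (b + 1) (c + 1) n
  refine ((gammaRatio_isBigO_rpow c d).mul hq').congr' ?_ (.of_forall fun n => ?_)
  · filter_upwards [eventually_add_natCast_pos c, eventually_add_natCast_pos d] with n hc hd
    have := (Real.Gamma_pos_of_pos hc).ne'
    have := (Real.Gamma_pos_of_pos hd).ne'
    simp only [dougallTerm, gammaRatio]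
    field_simp
  · beta_reduce
    rw [show a - b - 1 = c - d + -1 by linarith, Real.rpow_add (by positivity)]

/-- The unilateral part `∑_{j ≥ 0}` of Dougall's bilateral series `₂H₂` at `1`; for `d = 1` it is
the hypergeometric series `₂F₁(a, b; c; 1)` up to Gamma factors. -/
noncomputable def dougallSum (a b c d : ℝ) : ℝ := ∑' j, dougallTerm a b c d j

theorem dougallSum_comm_left (a b c d : ℝ) : dougallSum a b c d = dougallSum b a c d :=
  tsum_congr (dougallTerm_comm_left a b c d)

theorem dougallSum_comm_right (a b c d : ℝ) : dougallSum a b c d = dougallSum a b d c :=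
  tsum_congr (dougallTerm_comm_right a b c d)

theorem dougallSum_nonneg (ha : 0 < a) (hb : 0 < b) (hc : 0 < c) (hd : 0 < d) :
    0 ≤ dougallSum a b c d :=
  tsum_nonneg fun j => (dougallTerm_pos ha hb hc hd j).le

theorem dougallTerm_eq_mul_add_one_right (a b c d : ℝ) (j : ℕ) :
    dougallTerm a b c d j = (c + j) * dougallTerm a b (c + 1) d j := by
  rw [dougallTerm, dougallTerm, gammaRatio_eq_mul_gammaRatio_add_one_right, mul_assoc]

theorem dougallTerm_add_one_left (b c d : ℝ) {j : ℕ} (ha : a + j ≠ 0) :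
    dougallTerm (a + 1) b c d j = (a + j) * dougallTerm a b c d j := by
  rw [dougallTerm, dougallTerm, gammaRatio_add_one_left _ ha, mul_assoc]

theorem dougallTerm_eq_mul_add_one_last (a b c d : ℝ) (j : ℕ) :
    dougallTerm a b c d j = (d + j) * dougallTerm a b c (d + 1) j := by
  rw [dougallTerm_comm_right, dougallTerm_eq_mul_add_one_right, dougallTerm_comm_right]

theorem tsum_eq_mul_dougallTerm_of_telescoping (ha : ∀ m : ℕ, a ≠ -m) (hb : ∀ m : ℕ, b ≠ -m)
    (h : a + b < c + d) {f : ℕ → ℝ} (hf : Summable f) (hfj : ∀ j : ℕ,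
      f j = ((c + j) * (d + j) - (a + j) * (b + j)) * dougallTerm a b (c + 1) (d + 1) j) :
    ∑' j, f j = d * dougallTerm a b c (d + 1) 0 := by
  have hsub (j : ℕ) : f j = dougallTerm a b c d j - dougallTerm a b c d (j + 1) := by
    rw [hfj, dougallTerm_sub_dougallTerm_succ (mt eq_neg_of_add_eq_zero_left (ha j))
      (mt eq_neg_of_add_eq_zero_left (hb j))]
  rw [tsum_eq_sub_of_forall_eq_sub hf hsub (tendsto_dougallTerm h), sub_zero,
    dougallTerm_eq_mul_add_one_last, Nat.cast_zero, add_zero]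

theorem dougallSum_contiguous_right (ha : ∀ m : ℕ, a ≠ -m) (hb : ∀ m : ℕ, b ≠ -m)
    (h : a + b + 1 < c + d) :
    (c + d - a - b - 1) * dougallSum a b c d - (c - a) * (c - b) * dougallSum a b (c + 1) d =
      (d - 1) * dougallTerm a b c d 0 := by
  obtain ⟨e, rfl⟩ : ∃ e, d = e + 1 := ⟨d - 1, by ring⟩
  have h₁ := (summable_dougallTerm h).mul_left (c + (e + 1) - a - b - 1)
  have h₂ := (summable_dougallTerm (show a + b + 1 < c + 1 + (e + 1) by linarith)).mul_left
    ((c - a) * (c - b))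
  rw [dougallSum, dougallSum, ← tsum_mul_left, ← tsum_mul_left, ← h₁.tsum_sub h₂,
    add_sub_cancel_right]
  refine tsum_eq_mul_dougallTerm_of_telescoping ha hb (by linarith) (h₁.sub h₂) fun j => ?_
  rw [dougallTerm_eq_mul_add_one_right a b c (e + 1)]
  ring

theorem dougallSum_contiguous_left (ha : ∀ m : ℕ, a ≠ -m) (hb : ∀ m : ℕ, b ≠ -m)
    (h : a + b + 1 < c + d) :
    (c - b) * dougallSum (a + 1) b (c + 1) d + (d - a - 1) * dougallSum a b c d =
      (d - 1) * dougallTerm a b c d 0 := by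
  obtain ⟨e, rfl⟩ : ∃ e, d = e + 1 := ⟨d - 1, by ring⟩
  have h₁ := (summable_dougallTerm (show a + 1 + b + 1 < c + 1 + (e + 1) by linarith)).mul_left
    (c - b)
  have h₂ := (summable_dougallTerm h).mul_left (e + 1 - a - 1)
  rw [dougallSum, dougallSum, ← tsum_mul_left, ← tsum_mul_left, ← h₁.tsum_add h₂,
    add_sub_cancel_right]
  refine tsum_eq_mul_dougallTerm_of_telescoping ha hb (by linarith) (h₁.add h₂) fun j => ?_
  rw [dougallTerm_add_one_left _ _ _ (mt eq_neg_of_add_eq_zero_left (ha j)),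
    dougallTerm_eq_mul_add_one_right a b c (e + 1)]
  ring

theorem tendsto_Gamma_mul_dougallSum (hc : 0 < c) (h : a + b < c) :
    Tendsto (fun N : ℕ => Real.Gamma (c + N) * dougallSum a b (c + N) 1) atTop
      (𝓝 (Real.Gamma a * Real.Gamma b)) := by
  have hterm (N j : ℕ) : Real.Gamma (c + N) * dougallTerm a b (c + N) 1 j =
      gammaRatio c (c + j) N * (Real.Gamma (a + j) * gammaRatio b 1 j) := by
    simp only [dougallTerm, gammaRatio, add_right_comm c (N : ℝ) j]
    ring
  have hlim : Real.Gamma a * Real.Gamma b =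
      ∑' j : ℕ, if j = 0 then Real.Gamma a * Real.Gamma b else 0 := by simp
  simp_rw [dougallSum, ← tsum_mul_left, hterm]
  rw [hlim]
  refine tendsto_tsum_of_dominated_convergence
    (bound := fun j => |gammaRatio c (c + j) 0 * (Real.Gamma (a + j) * gammaRatio b 1 j)|)
    ?_ (fun j => ?_) (.of_forall fun N j => ?_)
  · simp_rw [← hterm]
    exact ((summable_dougallTerm (by simpa using h)).mul_left _).abs
  · rcases eq_or_ne j 0 with rfl | hj
    · refine tendsto_const_nhds.congr fun N => ?_
      have := (Real.Gamma_pos_of_pos (show 0 < c + N by positivity)).ne'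
      simp [gammaRatio, this]
    · have hj' : (0 : ℝ) < j := by exact_mod_cast hj.bot_lt
      simpa [hj] using ((gammaRatio_isBigO_rpow c (c + j)).trans_tendsto
        (tendsto_add_one_rpow (by linarith))).mul_const (Real.Gamma (a + j) * gammaRatio b 1 j)
  · have hcj : 0 < c + j := by positivity
    rw [Real.norm_eq_abs, abs_mul, abs_mul (gammaRatio c (c + j) 0),
      abs_of_pos (gammaRatio_pos hc hcj N), abs_of_pos (gammaRatio_pos hc hcj 0)]
    gcongr
    exact gammaRatio_le_gammaRatio_zero hc (le_add_of_nonneg_right j.cast_nonneg) N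

theorem dougallSum_one_right_mul_Gamma_quotient_comm (ha : ∀ m : ℕ, a ≠ -m)
    (hb : ∀ m : ℕ, b ≠ -m) (h : a + b < c) (N : ℕ) :
    dougallSum a b c 1 *
        (Real.Gamma (c + N - a - b) / (Real.Gamma (c + N - a) * Real.Gamma (c + N - b))) =
      Real.Gamma (c - a - b) / (Real.Gamma (c - a) * Real.Gamma (c - b)) *
        dougallSum a b (c + N) 1 := by
  induction N generalizing c with
  | zero => simp [mul_comm]
  | succ N ih =>
    have hpos : c - a - b ≠ 0 := by linarith
    have hrec : dougallSum a b c 1 =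
        (c - a) * (c - b) / (c - a - b) * dougallSum a b (c + 1) 1 := by
      have := dougallSum_contiguous_right (d := 1) ha hb (by linarith)
      rw [div_mul_eq_mul_div, eq_div_iff hpos]
      linear_combination this
    have hquot : Real.Gamma (c - a - b) / (Real.Gamma (c - a) * Real.Gamma (c - b)) =
        (c - a) * (c - b) / (c - a - b) * (Real.Gamma (c + 1 - a - b) /
          (Real.Gamma (c + 1 - a) * Real.Gamma (c + 1 - b))) := by
      rw [Gamma_eq_Gamma_add_one_div (c - a - b), Gamma_eq_Gamma_add_one_div (c - a),
        Gamma_eq_Gamma_add_one_div (c - b)]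
      simp only [div_mul_div_comm, div_div_div_eq, sub_add_eq_add_sub]
      ring
    have := ih (c := c + 1) (by linarith)
    rw [hrec, hquot, Nat.cast_succ, add_comm (N : ℝ) 1, ← add_assoc, mul_assoc, this]
    ring

theorem dougallSum_one_right (ha : ∀ m : ℕ, a ≠ -m) (hb : ∀ m : ℕ, b ≠ -m) (h : a + b < c) :
    dougallSum a b c 1 = Real.Gamma a * Real.Gamma b * Real.Gamma (c - a - b) /
      (Real.Gamma (c - a) * Real.Gamma (c - b)) := by
  obtain ⟨m, hm⟩ := exists_nat_gt (-c)
  have hlim := (tendsto_Gamma_mul_dougallSum (neg_lt_iff_pos_add'.1 hm)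
    (show a + b < c + m by linarith [m.cast_nonneg (α := ℝ)])).const_mul
      (Real.Gamma (c - a - b) / (Real.Gamma (c - a) * Real.Gamma (c - b)))
  have hone := (tendsto_dougallTerm_nhds_one (show (c + m) + (c + m - a - b) =
    (c + m - a) + (c + m - b) by ring)).const_mul (dougallSum a b c 1)
  rw [mul_one] at hone
  rw [mul_div_assoc, mul_comm]
  refine tendsto_nhds_unique hone (hlim.congr fun N => ?_)
  have := dougallSum_one_right_mul_Gamma_quotient_comm ha hb h (m + N)
  push_cast at this
  rw [mul_left_comm, add_assoc c, ← this, dougallTerm, gammaRatio, gammaRatio]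
  ring_nf

theorem dougallTerm_zero (a b c d : ℝ) :
    dougallTerm a b c d 0 = Real.Gamma a * Real.Gamma b / (Real.Gamma c * Real.Gamma d) := by
  simp only [dougallTerm, gammaRatio, Nat.cast_zero, add_zero, div_mul_div_comm]

theorem dougallSum_two_mul_sub_succ {h : ℝ} (hh : 1 / 2 < h) :
    (2 * h - 1) * dougallSum h h (2 * h) (2 * h) -
        h ^ 3 / 2 * dougallSum (h + 1) (h + 1) (2 * (h + 1)) (2 * (h + 1)) =
      (21 * h - 8) / 8 * dougallTerm h h (2 * h) (2 * h) 0 := by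
  have hh0 : 0 < h := by linarith
  have hne := ne_neg_natCast_of_pos hh0
  have hne' := ne_neg_natCast_of_pos (show 0 < h + 1 by linarith)
  -- The four relations walk from `(h, h; 2h, 2h)` to `(h + 1, h + 1; 2h + 2, 2h + 2)`.
  have h₁ := dougallSum_contiguous_right (c := 2 * h) (d := 2 * h) hne hne (by linarith)
  have h₂ := dougallSum_contiguous_left (c := 2 * h) (d := 2 * h + 1) hne hne (by linarith)
  have h₃ := dougallSum_contiguous_left (c := 2 * h + 1) (d := 2 * h + 1) hne hne' (by linarith)
  have h₄ := dougallSum_contiguous_right (c := 2 * h + 1) (d := 2 * h + 1 + 1) hne' hne'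
    (by linarith)
  rw [dougallSum_comm_right _ _ (2 * h + 1) (2 * h)] at h₁
  rw [dougallSum_comm_left (h + 1) h] at h₂
  rw [dougallSum_comm_right _ _ (2 * h + 1 + 1) (2 * h + 1)] at h₃
  have e₂ : 2 * h * dougallTerm h h (2 * h) (2 * h + 1) 0 = dougallTerm h h (2 * h) (2 * h) 0 := by
    rw [dougallTerm_eq_mul_add_one_last h h (2 * h) (2 * h), Nat.cast_zero, add_zero]
  have e₃ : 2 * h * dougallTerm h (h + 1) (2 * h + 1) (2 * h + 1) 0 =
      1 / 2 * dougallTerm h h (2 * h) (2 * h) 0 := by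
    simp only [dougallTerm_zero, Real.Gamma_add_one hh0.ne',
      Real.Gamma_add_one (show 2 * h ≠ 0 by linarith)]
    field_simp
  have e₄ : (2 * h + 1) * dougallTerm (h + 1) (h + 1) (2 * h + 1) (2 * h + 1 + 1) 0 =
      1 / 4 * dougallTerm h h (2 * h) (2 * h) 0 := by
    simp only [dougallTerm_zero, Real.Gamma_add_one hh0.ne',
      Real.Gamma_add_one (show 2 * h ≠ 0 by linarith),
      Real.Gamma_add_one (show 2 * h + 1 ≠ 0 by linarith)]
    field_simp
    norm_num
  rw [show 2 * (h + 1) = 2 * h + 1 + 1 by ring]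
  linear_combination h₁ + h * (h₂ + e₂) - h * (h₃ + e₃) + h / 2 * (h₄ + e₄)

/-! ### Telescoping of the Beta series -/

/-- The diagonal Beta value `B(u, u) = Γ(u)² / Γ(2u)`. -/
noncomputable def diagBeta (u : ℝ) : ℝ := Real.Gamma u ^ 2 / Real.Gamma (2 * u)

theorem diagBeta_pos {u : ℝ} (hu : 0 < u) : 0 < diagBeta u :=
  div_pos (pow_pos (Real.Gamma_pos_of_pos hu) 2) (Real.Gamma_pos_of_pos (by positivity))

/-- The series `∑ (21 v - 8) B(v, v)³` over `v ∈ u + ℕ`; up to a constant it is the series of the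
theorem at `u = 1 / 2 + x`. -/
noncomputable def betaSeries (u : ℝ) : ℝ := ∑' n : ℕ, (21 * (u + n) - 8) * diagBeta (u + n) ^ 3

/-- The potential whose differences are the summands of `betaSeries`. -/
noncomputable def betaPotential (h : ℝ) : ℝ :=
  8 * (2 * h - 1) * Real.Gamma h ^ 4 / Real.Gamma (2 * h) * dougallSum h h (2 * h) (2 * h)

theorem betaPotential_add_one {h : ℝ} (hh : 0 < h) :
    betaPotential (h + 1) = 4 * h ^ 3 * Real.Gamma h ^ 4 / Real.Gamma (2 * h) *
      dougallSum (h + 1) (h + 1) (2 * (h + 1)) (2 * (h + 1)) := by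
  have hΓ := (Real.Gamma_pos_of_pos (show 0 < 2 * h by positivity)).ne'
  rw [betaPotential, Real.Gamma_add_one hh.ne', show 2 * (h + 1) = 2 * h + 1 + 1 by ring,
    Real.Gamma_add_one (show 2 * h + 1 ≠ 0 by positivity),
    Real.Gamma_add_one (show 2 * h ≠ 0 by positivity)]
  field_simp
  ring

theorem betaPotential_sub_betaPotential_add_one {h : ℝ} (hh : 1 / 2 < h) :
    betaPotential h - betaPotential (h + 1) = (21 * h - 8) * diagBeta h ^ 3 := by
  have hdiff := dougallSum_two_mul_sub_succ hh
  rw [dougallTerm_zero] at hdiff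
  rw [betaPotential_add_one (by linarith), betaPotential, diagBeta]
  linear_combination 8 * Real.Gamma h ^ 4 / Real.Gamma (2 * h) * hdiff

theorem betaPotential_nonneg {h : ℝ} (hh : 1 / 2 < h) : 0 ≤ betaPotential h := by
  have hh0 : 0 < h := by linarith
  have h1 : 0 < 2 * h - 1 := by linarith
  have := Real.Gamma_pos_of_pos (show 0 < 2 * h by positivity)
  have hS := dougallSum_nonneg hh0 hh0 (c := 2 * h) (d := 2 * h) (by positivity) (by positivity)
  rw [betaPotential]
  positivity

theorem dougallSum_two_mul_add_one_le {h : ℝ} (hh : 1 / 2 < h) :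
    dougallSum (h + 1) (h + 1) (2 * (h + 1)) (2 * (h + 1)) ≤
      1 / (4 * h ^ 2) * dougallSum h h (2 * h) (2 * h) := by
  have hh0 : 0 < h := by linarith
  have hratio (j : ℕ) :
      gammaRatio (h + 1) (2 * (h + 1)) j ≤ 1 / (2 * h) * gammaRatio h (2 * h) j := by
    have hpos := gammaRatio_pos (a := h) (b := 2 * h + 1 + 1) hh0 (by positivity) j
    rw [show 2 * (h + 1) = 2 * h + 1 + 1 by ring, gammaRatio_add_one_left _ (by positivity),
      gammaRatio_eq_mul_gammaRatio_add_one_right _ (2 * h),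
      gammaRatio_eq_mul_gammaRatio_add_one_right _ (2 * h + 1), ← mul_assoc, ← mul_assoc]
    gcongr
    rw [div_mul_eq_mul_div, one_mul, div_mul_eq_mul_div, le_div_iff₀ (by positivity)]
    nlinarith [mul_nonneg hh0.le j.cast_nonneg (α := ℝ)]
  rw [dougallSum, dougallSum, ← tsum_mul_left]
  refine (summable_dougallTerm (by linarith)).tsum_le_tsum (fun j => ?_)
    ((summable_dougallTerm (by linarith)).mul_left _)
  calc dougallTerm (h + 1) (h + 1) (2 * (h + 1)) (2 * (h + 1)) j
      ≤ (1 / (2 * h) * gammaRatio h (2 * h) j) * (1 / (2 * h) * gammaRatio h (2 * h) j) :=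
        mul_le_mul (hratio j) (hratio j) (gammaRatio_pos (by positivity) (by positivity) j).le
          ((gammaRatio_pos (by positivity) (by positivity) j).le.trans (hratio j))
    _ = 1 / (4 * h ^ 2) * dougallTerm h h (2 * h) (2 * h) j := by
        rw [dougallTerm]
        field_simp
        ring

theorem betaPotential_add_one_le {h : ℝ} (hh : 1 ≤ h) :
    betaPotential (h + 1) ≤ 1 / 8 * betaPotential h := by
  have hh0 : 0 < h := by linarith
  have hle := dougallSum_two_mul_add_one_le (h := h) (by linarith)
  have : 0 < Real.Gamma h ^ 4 / Real.Gamma (2 * h) :=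
    div_pos (pow_pos (Real.Gamma_pos_of_pos hh0) 4) (Real.Gamma_pos_of_pos (by positivity))
  have hS := dougallSum_nonneg hh0 hh0 (c := 2 * h) (d := 2 * h) (by positivity) (by positivity)
  rw [betaPotential_add_one hh0, betaPotential]
  calc 4 * h ^ 3 * Real.Gamma h ^ 4 / Real.Gamma (2 * h) *
        dougallSum (h + 1) (h + 1) (2 * (h + 1)) (2 * (h + 1))
      ≤ 4 * h ^ 3 * Real.Gamma h ^ 4 / Real.Gamma (2 * h) *
        (1 / (4 * h ^ 2) * dougallSum h h (2 * h) (2 * h)) := by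
        rw [mul_div_assoc]
        gcongr
    _ = h * (Real.Gamma h ^ 4 / Real.Gamma (2 * h) * dougallSum h h (2 * h) (2 * h)) := by
        field_simp
    _ ≤ (2 * h - 1) * (Real.Gamma h ^ 4 / Real.Gamma (2 * h) * dougallSum h h (2 * h) (2 * h)) := by
        gcongr
        linarith
    _ = _ := by ring

theorem tendsto_betaPotential_add_natCast {h : ℝ} (hh : 1 / 2 < h) :
    Tendsto (fun n : ℕ => betaPotential (h + n)) atTop (𝓝 0) := by
  have hgeom := (tendsto_pow_atTop_nhds_zero_of_lt_one (r := (1 / 8 : ℝ)) (by norm_num)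
    (by norm_num)).mul_const (betaPotential (h + (0 + 1 : ℕ)))
  rw [zero_mul] at hgeom
  rw [← tendsto_add_atTop_iff_nat 1]
  refine squeeze_zero (fun n => betaPotential_nonneg ?_) (fun n => ?_) hgeom
  · exact hh.trans_le (le_add_of_nonneg_right (Nat.cast_nonneg _))
  refine le_geom (c := 1 / 8) (u := fun n : ℕ => betaPotential (h + (n + 1 : ℕ))) (by norm_num)
    n fun k _ => ?_
  push_cast
  rw [← add_assoc]
  exact betaPotential_add_one_le (by linarith [k.cast_nonneg (α := ℝ)])

theorem betaSeries_eq_betaPotential {h : ℝ} (hh : 1 / 2 < h) : betaSeries h = betaPotential h := by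
  have hn (n : ℕ) : 1 / 2 < h + n := hh.trans_le (le_add_of_nonneg_right n.cast_nonneg)
  refine ((hasSum_iff_tendsto_nat_of_nonneg (fun n => ?_) _).2 ?_).tsum_eq
  · have := diagBeta_pos (u := h + n) (by linarith [hn n])
    exact mul_nonneg (by linarith [hn n]) (by positivity)
  · have hsum (n : ℕ) : ∑ i ∈ Finset.range n, (21 * (h + i) - 8) * diagBeta (h + i) ^ 3 =
        betaPotential h - betaPotential (h + n) := by
      have := Finset.sum_range_sub' (fun i : ℕ => betaPotential (h + i)) n
      rw [Nat.cast_zero, add_zero] at this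
      rw [← this]
      refine Finset.sum_congr rfl fun i _ => ?_
      rw [← betaPotential_sub_betaPotential_add_one (hn i), Nat.cast_succ, add_assoc]
    simpa [hsum] using (tendsto_betaPotential_add_natCast hh).const_sub (betaPotential h)

/-! ### Evaluation of the potential -/

theorem Gamma_sub_natCast (ha : Real.sin (Real.pi * a) ≠ 0) (n : ℕ) :
    Real.Gamma (a - n) =
      (-1) ^ n * Real.pi / (Real.sin (Real.pi * a) * Real.Gamma (1 - a + n)) := by
  have hrefl := Real.Gamma_mul_Gamma_one_sub (a - n)
  rw [mul_sub, mul_comm Real.pi (n : ℝ), Real.sin_sub_nat_mul_pi, sub_sub_eq_add_sub,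
    add_sub_right_comm] at hrefl
  have hne : Real.Gamma (1 - a + n) ≠ 0 := fun h => by
    rw [h, mul_zero] at hrefl
    have := div_ne_zero Real.pi_ne_zero (mul_ne_zero (pow_ne_zero n (neg_ne_zero.2 one_ne_zero)) ha)
    exact this hrefl.symm
  rw [eq_div_iff (mul_ne_zero ha hne), mul_left_comm, hrefl]
  rcases neg_one_pow_eq_or ℝ n with h | h <;> rw [h] <;> field_simp

theorem Gamma_sub_natCast_div_Gamma_sub_natCast (ha : Real.sin (Real.pi * a) ≠ 0)
    (hc : Real.sin (Real.pi * c) ≠ 0) (n : ℕ) :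
    Real.Gamma (a - n) / Real.Gamma (c - n) =
      Real.sin (Real.pi * c) / Real.sin (Real.pi * a) * gammaRatio (1 - c) (1 - a) n := by
  rw [Gamma_sub_natCast ha, Gamma_sub_natCast hc, gammaRatio, div_div_div_cancel_left' _ _
    (mul_ne_zero (pow_ne_zero n (neg_ne_zero.2 one_ne_zero)) Real.pi_ne_zero), mul_div_mul_comm]

theorem exists_forall_abs_gammaRatio_sub_natCast_le {σ : ℝ} (ha : Real.sin (Real.pi * a) ≠ 0)
    (hc : Real.sin (Real.pi * c) ≠ 0) (hσ : 0 ≤ σ) (hσ' : σ ≤ c - a) :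
    ∃ C, 0 < C ∧ ∀ n j : ℕ,
      |gammaRatio (a - n) (c - n) j| ≤ C * (((j : ℝ) + 1) / (n + 1)) ^ σ := by
  obtain ⟨C₁, hC₁, hb₁⟩ := exists_forall_abs_le_of_isBigO_rpow (gammaRatio_isBigO_rpow a c)
  obtain ⟨C₂, _, hb₂⟩ := exists_forall_abs_le_of_isBigO_rpow
    ((gammaRatio_isBigO_rpow (1 - c) (1 - a)).const_mul_left
      (Real.sin (Real.pi * c) / Real.sin (Real.pi * a)))
  rw [sub_sub_sub_cancel_left] at hb₂
  have hdecay {n j k : ℕ} (h : n + 1 ≤ (k + 1) * (j + 1)) :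
      ((k : ℝ) + 1) ^ (a - c) ≤ (((j : ℝ) + 1) / (n + 1)) ^ σ := by
    have h' : (n : ℝ) + 1 ≤ (k + 1) * (j + 1) := by exact_mod_cast h
    calc ((k : ℝ) + 1) ^ (a - c) ≤ ((k : ℝ) + 1) ^ (-σ) :=
          Real.rpow_le_rpow_of_exponent_le (by simp) (by linarith)
      _ = (1 / ((k : ℝ) + 1)) ^ σ := by
          rw [Real.rpow_neg (by positivity), one_div, Real.inv_rpow (by positivity)]
      _ ≤ _ := by
          gcongr 1
          rw [div_le_div_iff₀ (by positivity) (by positivity)]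
          linarith
  refine ⟨max C₁ C₂, lt_max_of_lt_left hC₁, fun n j => ?_⟩
  rcases le_total n j with h | h <;> obtain ⟨k, rfl⟩ := Nat.exists_eq_add_of_le h
  · rw [gammaRatio_add, sub_add_cancel, sub_add_cancel]
    exact (hb₁ k).trans (mul_le_mul (le_max_left _ _) (hdecay (by nlinarith)) (by positivity)
      (hC₁.le.trans (le_max_left _ _)))
  · have : gammaRatio (a - (j + k : ℕ)) (c - (j + k : ℕ)) j =
        Real.sin (Real.pi * c) / Real.sin (Real.pi * a) * gammaRatio (1 - c) (1 - a) k := by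
      rw [← Gamma_sub_natCast_div_Gamma_sub_natCast ha hc, gammaRatio]
      push_cast
      ring_nf
    rw [this]
    exact (hb₂ k).trans (mul_le_mul (le_max_right _ _) (hdecay (by nlinarith)) (by positivity)
      (hC₁.le.trans (le_max_left _ _)))

theorem dougallSum_sub_natCast_sub_dougallSum_isBigO {b' d' σ : ℝ}
    (ha : Real.sin (Real.pi * a) ≠ 0) (hc : Real.sin (Real.pi * c) ≠ 0) (h : a + b + 1 < c + d)
    (hbd : b + d' = d + b') (hσ : 0 ≤ σ) (hσac : σ ≤ c - a) (hσbd : σ < d - b) :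
    (fun n : ℕ => dougallSum (a - n) b (c - n) d - dougallSum (a - n) b' (c - n) d') =O[atTop]
      fun n : ℕ => ((n : ℝ) + 1) ^ (-σ) := by
  obtain ⟨C₁, hC₁, hb₁⟩ := exists_forall_abs_gammaRatio_sub_natCast_le ha hc hσ hσac
  obtain ⟨C₂, _, hb₂⟩ := exists_forall_abs_le_of_isBigO_rpow
    (gammaRatio_sub_gammaRatio_isBigO_rpow hbd)
  have hsum := summable_add_one_rpow (show σ + (b - d - 1) < -1 by linarith)
  have hbound (n j : ℕ) :
      ‖dougallTerm (a - n) b (c - n) d j - dougallTerm (a - n) b' (c - n) d' j‖ ≤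
        C₁ * C₂ * ((n : ℝ) + 1) ^ (-σ) * ((j : ℝ) + 1) ^ (σ + (b - d - 1)) := by
    rw [dougallTerm, dougallTerm, ← mul_sub, norm_mul]
    refine (mul_le_mul (hb₁ n j) (hb₂ j) (abs_nonneg _) (by positivity)).trans_eq ?_
    rw [Real.div_rpow (by positivity) (by positivity), Real.rpow_add (by positivity),
      Real.rpow_neg (by positivity)]
    ring
  refine .of_bound (C₁ * C₂ * ∑' j : ℕ, ((j : ℝ) + 1) ^ (σ + (b - d - 1))) (.of_forall fun n => ?_)
  have hs := summable_dougallTerm (a := a - n) (b := b) (c := c - n) (d := d) (by linarith)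
  have hs' := summable_dougallTerm (a := a - n) (b := b') (c := c - n) (d := d') (by linarith)
  rw [dougallSum, dougallSum, ← hs.tsum_sub hs', Real.norm_of_nonneg (r := _ ^ _) (by positivity),
    mul_right_comm, ← tsum_mul_left]
  exact tsum_of_norm_bounded (hsum.mul_left _).hasSum (hbound n)

theorem sub_natCast_ne_neg_natCast (ha : Real.sin (Real.pi * a) ≠ 0) (n m : ℕ) :
    a - n ≠ -m := fun h => ha <| by
  obtain rfl : a = ((n - m : ℤ) : ℝ) := by push_cast; linarith
  rw [mul_comm, Real.sin_int_mul_pi]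

/-- The sums `∑_{j ≥ -n}` of the bilateral series with summand
`Γ(h + j)² / Γ(2h + j)²`, `h = 1 / 2 + x`, after the shift `n` has been moved to one pair of
parameters only; normalised so that consecutive values differ by a single Gamma product. -/
noncomputable def shiftedSum (x : ℝ) (n : ℕ) : ℝ :=
  gammaRatio (1 / 2 + x) (1 / 2 - x) n *
    dougallSum (1 / 2 + x - n) (1 / 2 + x) (1 + 2 * x - n) (1 + 2 * x)

theorem sin_pi_mul_half_add (y : ℝ) :
    Real.sin (Real.pi * (1 / 2 + y)) = Real.cos (Real.pi * y) := by
  rw [mul_add, mul_one_div, add_comm, Real.sin_add_pi_div_two]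

theorem sin_pi_mul_one_add (y : ℝ) : Real.sin (Real.pi * (1 + y)) = -Real.sin (Real.pi * y) := by
  rw [mul_add, mul_one, add_comm, Real.sin_add_pi]

theorem cos_pi_mul_pos {x : ℝ} (hx : -(1 / 2) < x) (hx' : x < 1 / 2) :
    0 < Real.cos (Real.pi * x) :=
  Real.cos_pos_of_mem_Ioo ⟨by nlinarith [Real.pi_pos], by nlinarith [Real.pi_pos]⟩

theorem sin_pi_mul_pos {x : ℝ} (hx : 0 < x) (hx' : x < 1) : 0 < Real.sin (Real.pi * x) :=
  Real.sin_pos_of_pos_of_lt_pi (by nlinarith [Real.pi_pos]) (by nlinarith [Real.pi_pos])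

theorem sin_pi_mul_half_add_ne_zero {x : ℝ} (hx : -(1 / 2) < x) (hx' : x < 1 / 2) :
    Real.sin (Real.pi * (1 / 2 + x)) ≠ 0 := by
  rw [sin_pi_mul_half_add]
  exact (cos_pi_mul_pos hx hx').ne'

theorem sin_pi_mul_one_add_ne_zero {x : ℝ} (hx : 0 < x) (hx' : x < 1) :
    Real.sin (Real.pi * (1 + x)) ≠ 0 := by
  rw [sin_pi_mul_one_add]
  exact neg_ne_zero.2 (sin_pi_mul_pos hx hx').ne'

theorem shiftedSum_sub_shiftedSum_succ {x : ℝ} (hx : 0 < x) (hx' : x < 1 / 2) (n : ℕ) :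
    shiftedSum x n - shiftedSum x (n + 1) =
      2 * Real.sin (Real.pi * x) * Real.Gamma (1 / 2 + x) / Real.Gamma (2 * x) *
        dougallTerm (1 / 2 + x) (1 - 2 * x) (3 / 2 - x) (3 / 2 - x) n := by
  have hcos := cos_pi_mul_pos (x := x) (by linarith) hx'
  have ha := sin_pi_mul_half_add_ne_zero (x := x) (by linarith) hx'
  have hc := sin_pi_mul_one_add_ne_zero (x := 2 * x) (by linarith) (by linarith)
  have hcont := dougallSum_contiguous_left (a := 1 / 2 + x - (n + 1 : ℕ)) (b := 1 / 2 + x)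
    (c := 1 + 2 * x - (n + 1 : ℕ)) (d := 1 + 2 * x) (sub_natCast_ne_neg_natCast ha _)
    (ne_neg_natCast_of_pos (by linarith)) (by linarith)
  have hterm : Real.Gamma (1 / 2 + x - (n + 1 : ℕ)) / Real.Gamma (1 + 2 * x - (n + 1 : ℕ)) =
      -(2 * Real.sin (Real.pi * x)) * gammaRatio (1 - 2 * x) (3 / 2 - x) n := by
    have hshift := gammaRatio_add (1 - (1 + 2 * x)) (1 - (1 / 2 + x)) 1 n
    rw [add_comm 1 n] at hshift
    rw [Gamma_sub_natCast_div_Gamma_sub_natCast ha hc, hshift, sin_pi_mul_half_add,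
      sin_pi_mul_one_add, mul_left_comm, Real.sin_two_mul, neg_div,
      mul_div_cancel_right₀ _ hcos.ne']
    push_cast
    ring_nf
  have hratio : gammaRatio (1 / 2 + x) (1 / 2 - x) (n + 1) =
      (1 / 2 + x + n) * gammaRatio (1 / 2 + x) (3 / 2 - x) n := by
    have ha : 1 / 2 + x + n ≠ 0 := by positivity
    rw [← gammaRatio_add_one_left _ ha, add_comm n 1, gammaRatio_add, Nat.cast_one]
    ring_nf
  have hΓ : Real.Gamma (1 + 2 * x) = 2 * x * Real.Gamma (2 * x) := by
    rw [add_comm, Real.Gamma_add_one (by positivity)]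
  rw [dougallTerm_zero, mul_div_mul_comm, hterm, hΓ] at hcont
  rw [shiftedSum, shiftedSum, hratio, gammaRatio_eq_mul_gammaRatio_add_one_right _ (1 / 2 - x),
    dougallTerm, show 1 / 2 - x + 1 = 3 / 2 - x by ring]
  rw [show 1 / 2 + x - (n + 1 : ℕ) + 1 = 1 / 2 + x - n by push_cast; ring,
    show 1 + 2 * x - (n + 1 : ℕ) + 1 = 1 + 2 * x - n by push_cast; ring] at hcont
  have hΓ' := (Real.Gamma_pos_of_pos (show 0 < 2 * x by positivity)).ne'
  push_cast at hcont ⊢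
  have hd : Real.Gamma (1 / 2 + x) / (2 * x * Real.Gamma (2 * x)) * (2 * x) =
      Real.Gamma (1 / 2 + x) / Real.Gamma (2 * x) := by
    field_simp
  linear_combination -gammaRatio (1 / 2 + x) (3 / 2 - x) n * hcont + 2 * Real.sin (Real.pi * x) *
    gammaRatio (1 / 2 + x) (3 / 2 - x) n * gammaRatio (1 - 2 * x) (3 / 2 - x) n * hd

theorem tendsto_gammaRatio_mul_dougallSum_one {x : ℝ} (hx : 0 < x) (hx' : x < 1 / 6) :
    Tendsto (fun n : ℕ => gammaRatio (1 / 2 + x) (1 / 2 - x) n *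
        dougallSum (1 / 2 + x - n) (1 / 2 - x) (1 + 2 * x - n) 1) atTop
      (𝓝 (Real.cos (Real.pi * (3 * x)) / Real.cos (Real.pi * x) *
        (Real.Gamma (1 / 2 - x) * Real.Gamma (2 * x) / Real.Gamma (1 / 2 + x)))) := by
  have ha := sin_pi_mul_half_add_ne_zero (x := x) (by linarith) (by linarith)
  have hc := sin_pi_mul_half_add_ne_zero (x := 3 * x) (by linarith) (by linarith)
  have hone := (tendsto_dougallTerm_nhds_one (a := 1 / 2 + x) (b := 1 / 2 - 3 * x) (c := 1 / 2 - x)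
    (d := 1 / 2 - x) (by ring)).const_mul (Real.cos (Real.pi * (3 * x)) / Real.cos (Real.pi * x) *
      (Real.Gamma (1 / 2 - x) * Real.Gamma (2 * x) / Real.Gamma (1 / 2 + x)))
  rw [mul_one] at hone
  refine hone.congr fun n => ?_
  have hterm := Gamma_sub_natCast_div_Gamma_sub_natCast ha hc n
  rw [dougallSum_one_right (sub_natCast_ne_neg_natCast ha n) (ne_neg_natCast_of_pos (by linarith))
    (by linarith), show 1 + 2 * x - n - (1 / 2 + x - n) - (1 / 2 - x) = 2 * x by ring,
    show 1 + 2 * x - n - (1 / 2 + x - n) = 1 / 2 + x by ring,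
    show 1 + 2 * x - n - (1 / 2 - x) = 1 / 2 + 3 * x - n by ring, dougallTerm,
    mul_comm (Real.Gamma (1 / 2 + x)), mul_assoc (Real.Gamma _) (Real.Gamma _) (Real.Gamma _),
    mul_div_mul_comm, hterm, sin_pi_mul_half_add, sin_pi_mul_half_add]
  ring_nf

theorem tendsto_shiftedSum {x : ℝ} (hx : 0 < x) (hx' : x < 1 / 6) :
    Tendsto (shiftedSum x) atTop
      (𝓝 (Real.cos (Real.pi * (3 * x)) / Real.cos (Real.pi * x) *
        (Real.Gamma (1 / 2 - x) * Real.Gamma (2 * x) / Real.Gamma (1 / 2 + x)))) := by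
  have ha := sin_pi_mul_half_add_ne_zero (x := x) (by linarith) (by linarith)
  have hc := sin_pi_mul_one_add_ne_zero (x := 2 * x) (by linarith) (by linarith)
  have herr := (gammaRatio_isBigO_rpow (1 / 2 + x) (1 / 2 - x)).mul
    (dougallSum_sub_natCast_sub_dougallSum_isBigO (σ := 3 * x) (b := 1 / 2 + x) (d := 1 + 2 * x)
      (b' := 1 / 2 - x) (d' := 1) ha hc (by linarith) (by ring) (by linarith) (by linarith)
      (by linarith))
  have hzero := herr.trans_tendsto <| (tendsto_add_one_rpow (neg_neg_of_pos hx)).congr fun n => by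
    rw [← Real.rpow_add (by positivity)]
    ring_nf
  rw [← zero_add (_ * _)]
  refine (hzero.add (tendsto_gammaRatio_mul_dougallSum_one hx hx')).congr fun n => ?_
  rw [shiftedSum]
  ring

theorem shiftedSum_zero {x : ℝ} (hx : 0 < x) (hx' : x < 1 / 6) :
    shiftedSum x 0 = Real.cos (Real.pi * (3 * x)) / Real.cos (Real.pi * x) *
        (Real.Gamma (1 / 2 - x) * Real.Gamma (2 * x) / Real.Gamma (1 / 2 + x)) +
      2 * Real.sin (Real.pi * x) * Real.Gamma (1 / 2 + x) / Real.Gamma (2 * x) *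
        dougallSum (1 / 2 + x) (1 - 2 * x) (3 / 2 - x) (3 / 2 - x) := by
  have hsum := tsum_eq_sub_of_forall_eq_sub ((summable_dougallTerm (a := 1 / 2 + x)
    (b := 1 - 2 * x) (c := 3 / 2 - x) (d := 3 / 2 - x) (by linarith)).mul_left _)
    (fun n => (shiftedSum_sub_shiftedSum_succ hx (by linarith) n).symm) (tendsto_shiftedSum hx hx')
  rw [dougallSum, ← tsum_mul_left, hsum]
  ring

theorem betaPotential_half_add {x : ℝ} (hx : 0 < x) (hx' : x < 1 / 6) :
    betaPotential (1 / 2 + x) = 8 * Real.pi ^ 2 * (Real.cos (Real.pi * (3 * x)) /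
        Real.cos (Real.pi * x) ^ 3) +
      16 * Real.Gamma (1 / 2 + x) ^ 4 * Real.Gamma (1 / 2 - x) * Real.sin (Real.pi * x) /
        Real.Gamma (2 * x) ^ 2 * dougallSum (1 / 2 + x) (1 - 2 * x) (3 / 2 - x) (3 / 2 - x) := by
  have hcos := cos_pi_mul_pos (x := x) (by linarith) (by linarith)
  have hΓ₁ := Real.Gamma_pos_of_pos (show 0 < 1 / 2 + x by linarith)
  have hΓ₂ := Real.Gamma_pos_of_pos (show 0 < 1 / 2 - x by linarith)
  have := Real.Gamma_pos_of_pos (show 0 < 2 * x by linarith)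
  have hrefl := Real.Gamma_mul_Gamma_one_sub (1 / 2 + x)
  rw [sin_pi_mul_half_add, show 1 - (1 / 2 + x) = 1 / 2 - x by ring, eq_div_iff hcos.ne'] at hrefl
  have hzero := shiftedSum_zero hx hx'
  rw [shiftedSum, gammaRatio] at hzero
  simp only [Nat.cast_zero, add_zero, sub_zero] at hzero
  have hpot : betaPotential (1 / 2 + x) =
      8 * Real.Gamma (1 / 2 + x) ^ 3 * Real.Gamma (1 / 2 - x) / Real.Gamma (2 * x) *
        (Real.Gamma (1 / 2 + x) / Real.Gamma (1 / 2 - x) *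
          dougallSum (1 / 2 + x) (1 / 2 + x) (1 + 2 * x) (1 + 2 * x)) := by
    rw [betaPotential, show 2 * (1 / 2 + x) = 2 * x + 1 by ring, Real.Gamma_add_one (by positivity),
      add_comm (2 * x), add_sub_cancel_left]
    generalize Real.Gamma (1 / 2 - x) = G at hΓ₂
    field_simp
  rw [hpot, hzero, show Real.pi ^ 2 = (Real.Gamma (1 / 2 + x) * Real.Gamma (1 / 2 - x) *
    Real.cos (Real.pi * x)) ^ 2 by rw [hrefl]]
  generalize Real.Gamma (1 / 2 + x) = G₁, Real.Gamma (1 / 2 - x) = G₂, Real.cos (Real.pi * x) = C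
    at hcos hΓ₁ hΓ₂
  field_simp
  ring

/-! ### Catalan's constant -/

theorem dougallTerm_one_half_natCast_eq_zero {k n : ℕ} (h : n < k) :
    dougallTerm 1 (1 / 2) (k + 2) (1 - k) n = 0 := by
  obtain ⟨m, rfl⟩ := Nat.exists_eq_add_of_lt h
  have : (1 - (n + m + 1 : ℕ) + n : ℝ) = -m := by push_cast; ring
  rw [dougallTerm, gammaRatio, gammaRatio, this, Real.Gamma_neg_nat_eq_zero, div_zero, mul_zero]

theorem dougallTerm_one_half_natCast_nonneg (k n : ℕ) :
    0 ≤ dougallTerm 1 (1 / 2) (k + 2) (1 - k) n := by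
  rcases lt_or_ge n k with h | h
  · exact (dougallTerm_one_half_natCast_eq_zero h).ge
  · obtain ⟨j, rfl⟩ := Nat.exists_eq_add_of_le h
    rw [dougallTerm_add, sub_add_cancel]
    exact (dougallTerm_pos (by positivity) (by positivity) (by positivity) one_pos j).le

theorem hasSum_dougallTerm_one_half_natCast (k : ℕ) :
    HasSum (dougallTerm 1 (1 / 2) (k + 2) (1 - k)) (2 * √Real.pi / (2 * k + 1)) := by
  have hs : Summable (dougallTerm 1 (1 / 2) (k + 2) (1 - k)) := summable_dougallTerm (by linarith)
  have hΓ := (Real.Gamma_pos_of_pos (show (0 : ℝ) < k + 1 by positivity)).ne'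
  have hΓ' := (Real.Gamma_pos_of_pos (show (0 : ℝ) < k + 1 / 2 by positivity)).ne'
  convert hs.hasSum
  rw [← hs.sum_add_tsum_nat_add k,
    Finset.sum_eq_zero fun n hn => dougallTerm_one_half_natCast_eq_zero (Finset.mem_range.1 hn),
    zero_add]
  have hshift (j : ℕ) : dougallTerm 1 (1 / 2) (k + 2) (1 - k) (j + k) =
      dougallTerm (k + 1) (k + 1 / 2) (2 * k + 2) 1 j := by
    rw [add_comm j, dougallTerm_add, sub_add_cancel, add_right_comm, ← two_mul, add_comm 1 (k : ℝ),
      add_comm (1 / 2)]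
  rw [tsum_congr hshift, ← dougallSum, dougallSum_one_right (ne_neg_natCast_of_pos (by positivity))
    (ne_neg_natCast_of_pos (by positivity)) (by linarith),
    show (2 * k + 2 - (k + 1) - (k + 1 / 2) : ℝ) = 1 / 2 by ring,
    show (2 * k + 2 - (k + 1) : ℝ) = k + 1 by ring,
    show (2 * k + 2 - (k + 1 / 2) : ℝ) = k + 1 / 2 + 1 by ring,
    Real.Gamma_add_one (s := k + 1 / 2) (by positivity), Real.Gamma_one_half_eq]
  generalize Real.Gamma (k + 1 / 2 : ℝ) = G at hΓ'
  field_simp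

/-- The terms of the finite alternating sum over `k` obtained when the double sum for Catalan's
constant is summed over `k` first. -/
noncomputable def catalanTerm (n k : ℕ) : ℝ :=
  (-1) ^ k / (2 * k + 1) * (Real.Gamma (n + k + 2))⁻¹ * (Real.Gamma (n + 1 - k))⁻¹

theorem catalanTerm_mul_eq (n k : ℕ) :
    Real.Gamma (1 + n) * Real.Gamma (1 / 2 + n) * catalanTerm n k =
      (-1) ^ k / (2 * k + 1) * dougallTerm 1 (1 / 2) (k + 2) (1 - k) n := by
  rw [catalanTerm, dougallTerm, gammaRatio, gammaRatio]
  ring_nf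

theorem inv_Gamma_eq_mul_inv_Gamma_add_one (s : ℝ) :
    (Real.Gamma s)⁻¹ = s * (Real.Gamma (s + 1))⁻¹ := by
  rw [Gamma_eq_Gamma_add_one_div, inv_div, div_eq_mul_inv]

theorem inv_Gamma_sub_natCast_eq_zero {n k : ℕ} (h : n < k) :
    (Real.Gamma (n + 1 - k))⁻¹ = 0 := by
  obtain ⟨m, rfl⟩ := Nat.exists_eq_add_of_lt h
  rw [show (n + 1 - (n + m + 1 : ℕ) : ℝ) = -m by push_cast; ring, Real.Gamma_neg_nat_eq_zero,
    inv_zero]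

theorem summable_catalanTerm (n : ℕ) : Summable (catalanTerm n) :=
  summable_of_ne_finset_zero (s := Finset.range (n + 1)) fun k hk => by
    rw [catalanTerm, inv_Gamma_sub_natCast_eq_zero (by simpa using hk), mul_zero]

theorem tsum_catalanTerm_succ (n : ℕ) :
    ((n : ℝ) + 3 / 2) ^ 2 * ∑' k, catalanTerm (n + 1) k = ∑' k, catalanTerm n k := by
  -- The certificate of Zeilberger's algorithm for the sum over `k`.
  let Y (k : ℕ) : ℝ := (-1) ^ k * k / (4 * (n + 1)) *
    (Real.Gamma (n + k + 2))⁻¹ * (Real.Gamma (n + 2 - k))⁻¹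
  have hY : Tendsto Y atTop (𝓝 0) := by
    refine tendsto_const_nhds.congr' ?_
    filter_upwards [eventually_gt_atTop (n + 1)] with k hk
    have := inv_Gamma_sub_natCast_eq_zero hk
    rw [show ((n + 1 : ℕ) + 1 - k : ℝ) = n + 2 - k by push_cast; ring] at this
    simp only [Y, this, mul_zero]
  have hdiff (k : ℕ) : ((n : ℝ) + 3 / 2) ^ 2 * catalanTerm (n + 1) k - catalanTerm n k =
      Y k - Y (k + 1) := by
    have h₁ := inv_Gamma_eq_mul_inv_Gamma_add_one (n + k + 2)
    have h₂ := inv_Gamma_eq_mul_inv_Gamma_add_one (n + 1 - k)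
    have hk : (2 * k + 1 : ℝ) ≠ 0 := by positivity
    have hn : (n + 1 : ℝ) ≠ 0 := by positivity
    simp only [catalanTerm, Y]
    push_cast
    rw [show (n + (k + 1) + 2 : ℝ) = n + k + 2 + 1 by ring,
      show (n + 2 - (k + 1) : ℝ) = n + 1 - k by ring,
      show (n + 1 + k + 2 : ℝ) = n + k + 2 + 1 by ring,
      show (n + 2 - k : ℝ) = n + 1 - k + 1 by ring,
      show (n + 1 + 1 - k : ℝ) = n + 1 - k + 1 by ring, h₁, h₂]
    generalize (Real.Gamma (n + k + 2 + 1))⁻¹ = P, (Real.Gamma (n + 1 - k + 1))⁻¹ = Q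
    field_simp
    ring
  have hs := (summable_catalanTerm (n + 1)).mul_left (((n : ℝ) + 3 / 2) ^ 2)
  have := tsum_eq_sub_of_forall_eq_sub (hs.sub (summable_catalanTerm n)) hdiff hY
  rw [hs.tsum_sub (summable_catalanTerm n), tsum_mul_left] at this
  simpa [Y, sub_eq_zero] using this

theorem tsum_catalanTerm (n : ℕ) :
    ∑' k, catalanTerm n k = Real.Gamma (3 / 2) ^ 2 / Real.Gamma (3 / 2 + n) ^ 2 := by
  induction n with
  | zero =>
    rw [tsum_eq_single 0 fun k hk => by
      rw [catalanTerm, inv_Gamma_sub_natCast_eq_zero (Nat.pos_of_ne_zero hk), mul_zero]]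
    have := (Real.Gamma_pos_of_pos (show (0 : ℝ) < 3 / 2 by norm_num)).ne'
    simp [catalanTerm, this]
  | succ n ih =>
    have hn : (3 / 2 + n : ℝ) ≠ 0 := by positivity
    rw [← tsum_catalanTerm_succ, mul_comm, ← eq_div_iff (by positivity)] at ih
    rw [ih, Nat.cast_succ, ← add_assoc, Real.Gamma_add_one hn, mul_pow, div_div, add_comm (n : ℝ),
      mul_comm (_ ^ 2)]

theorem summable_one_div_odd_sq : Summable fun k : ℕ => 1 / (2 * (k : ℝ) + 1) ^ 2 := by
  have := (Real.summable_one_div_nat_pow.2 one_lt_two).comp_injective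
    (i := fun k : ℕ => 2 * k + 1) fun _ _ h => by simpa using h
  simpa [Function.comp_def] using this

theorem summable_uncurry_alternating_dougallTerm :
    Summable (Function.uncurry fun k n : ℕ =>
      (-1 : ℝ) ^ k / (2 * k + 1) * dougallTerm 1 (1 / 2) (k + 2) (1 - k) n) := by
  have habs (k n : ℕ) : |(-1 : ℝ) ^ k / (2 * k + 1) * dougallTerm 1 (1 / 2) (k + 2) (1 - k) n| =
      1 / (2 * k + 1) * dougallTerm 1 (1 / 2) (k + 2) (1 - k) n := by
    rw [abs_mul, abs_div, abs_neg_one_pow, abs_of_nonneg (dougallTerm_one_half_natCast_nonneg k n),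
      abs_of_pos (by positivity)]
  rw [← summable_abs_iff, summable_prod_of_nonneg fun _ => abs_nonneg _]
  simp only [Function.uncurry, habs]
  refine ⟨fun k => (hasSum_dougallTerm_one_half_natCast k).summable.mul_left _, ?_⟩
  simp only [tsum_mul_left, (hasSum_dougallTerm_one_half_natCast _).tsum_eq]
  refine (summable_one_div_odd_sq.mul_left (2 * √Real.pi)).congr fun k => ?_
  field_simp

theorem dougallSum_half_one_eq_catalan :
    dougallSum (1 / 2) 1 (3 / 2) (3 / 2) = 8 * catalan' / √Real.pi := by
  have hΓ : Real.Gamma (3 / 2) = √Real.pi / 2 := by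
    rw [show (3 / 2 : ℝ) = 1 / 2 + 1 by norm_num, Real.Gamma_add_one (by norm_num),
      Real.Gamma_one_half_eq]
    ring
  have hpi : 0 < √Real.pi := Real.sqrt_pos.2 Real.pi_pos
  have hrow (k : ℕ) : ∑' n, (-1 : ℝ) ^ k / (2 * k + 1) * dougallTerm 1 (1 / 2) (k + 2) (1 - k) n =
      2 * √Real.pi * ((-1) ^ k / (2 * k + 1) ^ 2) := by
    rw [tsum_mul_left, (hasSum_dougallTerm_one_half_natCast k).tsum_eq]
    field_simp
  have hcol (n : ℕ) : ∑' k : ℕ, (-1 : ℝ) ^ k / (2 * k + 1) *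
      dougallTerm 1 (1 / 2) (k + 2) (1 - k) n =
        √Real.pi ^ 2 / 4 * dougallTerm (1 / 2) 1 (3 / 2) (3 / 2) n := by
    simp_rw [← catalanTerm_mul_eq]
    rw [tsum_mul_left, tsum_catalanTerm, dougallTerm, gammaRatio, gammaRatio, hΓ]
    ring
  have hcomm := summable_uncurry_alternating_dougallTerm.tsum_comm
  rw [tsum_congr hrow, tsum_congr hcol, tsum_mul_left, tsum_mul_left] at hcomm
  rw [dougallSum, catalan', eq_div_iff hpi.ne']
  refine mul_left_cancel₀ hpi.ne' ?_
  linear_combination 4 * hcomm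

/-! ### Continuity in the parameters -/

theorem continuousAt_Gamma_of_pos {s : ℝ} (hs : 0 < s) : ContinuousAt Real.Gamma s :=
  (Real.differentiableAt_Gamma (ne_neg_natCast_of_pos hs)).continuousAt

theorem tendsto_gammaRatio {ι : Type*} {l : Filter ι} {f g : ι → ℝ} (hf : Tendsto f l (𝓝 a))
    (hg : Tendsto g l (𝓝 b)) (ha : 0 < a) (hb : 0 < b) (n : ℕ) :
    Tendsto (fun i => gammaRatio (f i) (g i) n) l (𝓝 (gammaRatio a b n)) :=
  ((continuousAt_Gamma_of_pos (by positivity)).tendsto.comp (hf.add_const (n : ℝ))).div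
    ((continuousAt_Gamma_of_pos (by positivity)).tendsto.comp (hg.add_const (n : ℝ)))
    (Real.Gamma_pos_of_pos (by positivity)).ne'

theorem dougallTerm_le {a' b' c' d' : ℝ} (ha : 0 < a) (hb : 0 < b) (hc : 0 < c) (hd : 0 < d)
    (haa' : a ≤ a') (hbb' : b ≤ b') (hcc' : c ≤ c') (hdd' : d ≤ d') (j : ℕ) :
    dougallTerm a b c' d' j ≤
      dougallTerm a b c' d' 0 / dougallTerm a' b' c d 0 * dougallTerm a' b' c d j := by
  have hmul := mul_le_mul (gammaRatio_div_gammaRatio_zero_le ha haa' hc hcc' j)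
    (gammaRatio_div_gammaRatio_zero_le hb hbb' hd hdd' j)
    (div_pos (gammaRatio_pos hb (by linarith) j) (gammaRatio_pos hb (by linarith) 0)).le
    (div_pos (gammaRatio_pos (by linarith) hc j) (gammaRatio_pos (by linarith) hc 0)).le
  rw [div_mul_div_comm, div_mul_div_comm, ← dougallTerm, ← dougallTerm, ← dougallTerm,
    ← dougallTerm,
    div_le_iff₀ (dougallTerm_pos ha hb (hc.trans_le hcc') (hd.trans_le hdd') 0)] at hmul
  exact hmul.trans_eq (by ring)

theorem tendsto_dougallSum {ι : Type*} {l : Filter ι} [l.IsCountablyGenerated]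
    {f₁ f₂ f₃ f₄ : ι → ℝ} (h₁ : Tendsto f₁ l (𝓝 a))
    (h₂ : Tendsto f₂ l (𝓝 b)) (h₃ : Tendsto f₃ l (𝓝 c)) (h₄ : Tendsto f₄ l (𝓝 d)) (ha : 0 < a)
    (hb : 0 < b) (hc : 0 < c) (hd : 0 < d) (h : a + b + 1 < c + d) :
    Tendsto (fun i => dougallSum (f₁ i) (f₂ i) (f₃ i) (f₄ i)) l (𝓝 (dougallSum a b c d)) := by
  obtain ⟨ε, hε, hε'⟩ := exists_between
    (lt_min (show 0 < (c + d - (a + b + 1)) / 4 by linarith) (lt_min hc hd))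
  obtain ⟨hεs, hεc, hεd⟩ : ε < (c + d - (a + b + 1)) / 4 ∧ ε < c ∧ ε < d := by simpa using hε'
  have hterm (j : ℕ) : Tendsto (fun i => dougallTerm (f₁ i) (f₂ i) (f₃ i) (f₄ i) j) l
      (𝓝 (dougallTerm a b c d j)) :=
    (tendsto_gammaRatio h₁ h₃ ha hc j).mul (tendsto_gammaRatio h₂ h₄ hb hd j)
  have hmaj : Summable fun j => (dougallTerm a b c d 0 + 1) /
      dougallTerm (a + ε) (b + ε) (c - ε) (d - ε) 0 *
        dougallTerm (a + ε) (b + ε) (c - ε) (d - ε) j :=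
    (summable_dougallTerm (by linarith)).mul_left _
  have hpos (j : ℕ) : 0 < dougallTerm (a + ε) (b + ε) (c - ε) (d - ε) j :=
    dougallTerm_pos (by positivity) (by positivity) (sub_pos.2 hεc) (sub_pos.2 hεd) j
  refine tendsto_tsum_of_dominated_convergence hmaj hterm ?_
  filter_upwards [h₁.eventually_const_lt ha, h₂.eventually_const_lt hb,
    h₁.eventually_le_const (lt_add_of_pos_right a hε),
    h₂.eventually_le_const (lt_add_of_pos_right b hε), h₃.eventually_const_le (sub_lt_self c hε),
    h₄.eventually_const_le (sub_lt_self d hε),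
    (hterm 0).eventually_le_const (lt_add_one _)] with i hi₁ hi₂ hi₁' hi₂' hi₃ hi₄ hi₀ j
  rw [Real.norm_of_nonneg (dougallTerm_pos hi₁ hi₂ (by linarith) (by linarith) j).le]
  refine (dougallTerm_le hi₁ hi₂ (sub_pos.2 hεc) (sub_pos.2 hεd) hi₁' hi₂' hi₃ hi₄ j).trans ?_
  have := hpos j
  have := hpos 0
  gcongr

/-! ### Local expansions -/

theorem isBigO_pow_succ_of_isLittleO_pow {𝕜 E : Type*} [NontriviallyNormedField 𝕜]
    [NormedAddCommGroup E] [NormedSpace 𝕜 E] {f : 𝕜 → E} {z₀ : 𝕜} {l : Filter 𝕜} [l.NeBot] {n : ℕ}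
    (hf : AnalyticAt 𝕜 f z₀) (hl : l ≤ 𝓝[≠] z₀) (h : f =o[l] fun z => (z - z₀) ^ n) :
    f =O[𝓝 z₀] fun z => (z - z₀) ^ (n + 1) := by
  have hpow {k m : ℕ} (hkm : k ≤ m) : (fun z => (z - z₀) ^ m) =O[𝓝 z₀] fun z => (z - z₀) ^ k := by
    obtain rfl | hlt := hkm.eq_or_lt
    · exact isBigO_refl _ _
    · simpa only [← norm_pow, isBigO_norm_norm] using (isLittleO_pow_sub_pow_sub z₀ hlt).isBigO
  by_cases h0 : ∀ᶠ z in 𝓝 z₀, f z = 0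
  · exact (isBigO_zero _ _).congr' (h0.mono fun z hz => hz.symm) .rfl
  obtain ⟨m, g, hg, hg0, hfg⟩ := hf.exists_eventuallyEq_pow_smul_nonzero_iff.2 h0
  have hgΘ : g =Θ[𝓝 z₀] fun _ => (1 : 𝕜) :=
    ((isEquivalent_const_iff_tendsto hg0).2 hg.continuousAt).isTheta.trans
      (isTheta_const_const hg0 one_ne_zero)
  have hfΘ : f =Θ[𝓝 z₀] fun z => (z - z₀) ^ m := by
    simpa using (EventuallyEq.isTheta hfg).trans ((isTheta_refl _ _).smul hgΘ)
  refine hfΘ.1.trans (hpow (Nat.succ_le_of_lt (not_le.1 fun hmn => ?_)))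
  have hl' : l ≤ 𝓝 z₀ := hl.trans nhdsWithin_le_nhds
  refine isLittleO_irrefl (Eventually.frequently ?_)
    ((hfΘ.2.mono hl').trans_isLittleO (h.trans_isBigO ((hpow hmn).mono hl')))
  filter_upwards [hl self_mem_nhdsWithin] with z hz
  exact pow_ne_zero _ (sub_ne_zero.2 hz)

theorem isBigO_sub_const_mul_pow_of_tendsto_div {𝕜 : Type*} [NontriviallyNormedField 𝕜] {f : 𝕜 → 𝕜}
    {L : 𝕜} {l : Filter 𝕜} [l.NeBot] {n : ℕ} (hf : AnalyticAt 𝕜 f 0) (hl : l ≤ 𝓝[≠] 0)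
    (h : Tendsto (fun z => f z / z ^ n) l (𝓝 L)) :
    (fun z => f z - L * z ^ n) =O[𝓝 0] fun z => z ^ (n + 1) := by
  have hne : ∀ᶠ z in l, z ^ n ≠ 0 :=
    (eventually_mem_nhdsWithin.filter_mono hl).mono fun z => pow_ne_zero n
  have hlim : Tendsto (fun z => (f z - L * z ^ n) / z ^ n) l (𝓝 0) := by
    rw [← sub_self L]
    refine (h.sub_const L).congr' (hne.mono fun z hz => ?_)
    field_simp
  have hlittle : (fun z => f z - L * z ^ n) =o[l] fun z => (z - 0) ^ n := by
    simpa only [sub_zero] using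
      (isLittleO_iff_tendsto' (hne.mono fun z hz h0 => absurd h0 hz)).2 hlim
  simpa only [sub_zero] using isBigO_pow_succ_of_isLittleO_pow (by fun_prop) hl hlittle

theorem sin_sub_self_isBigO : (fun y => Real.sin y - y) =O[𝓝 0] fun y => y ^ 3 := by
  refine .of_bound 1 ?_
  filter_upwards [eventually_abs_sub_lt (0 : ℝ) one_pos] with y hy
  rw [sub_zero] at hy
  have h := Real.sin_bound hy.le
  have h5 : |y| ^ 5 ≤ |y| ^ 3 := pow_le_pow_of_le_one (abs_nonneg y) hy.le (by norm_num)
  calc ‖Real.sin y - y‖ = |(Real.sin y - (y - y ^ 3 / 6)) - y ^ 3 / 6| := by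
        rw [Real.norm_eq_abs]; ring_nf
    _ ≤ |y| ^ 5 / 100 + |y ^ 3 / 6| := (abs_sub _ _).trans (by gcongr)
    _ ≤ 1 * ‖y ^ 3‖ := by
        rw [abs_div, abs_pow, norm_pow, Real.norm_eq_abs, abs_of_pos (by norm_num : (0 : ℝ) < 6)]
        linarith [pow_nonneg (abs_nonneg y) 3]

theorem cos_sub_one_isBigO : (fun y => Real.cos y - 1) =O[𝓝 0] fun y => y ^ 2 := by
  refine .of_bound 1 (.of_forall fun y => ?_)
  rw [Real.norm_eq_abs, Real.norm_eq_abs, abs_of_nonneg (sq_nonneg y),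
    abs_of_nonpos (by linarith [Real.cos_le_one y])]
  nlinarith [Real.one_sub_sq_div_two_le_cos (x := y)]

theorem eventually_cos_ne_zero : ∀ᶠ y in 𝓝 (0 : ℝ), Real.cos y ≠ 0 :=
  Real.continuous_cos.continuousAt.eventually_ne (by simp)

theorem tan_sub_self_isBigO : (fun y => Real.tan y - y) =O[𝓝 0] fun y => y ^ 3 := by
  have hcos : Tendsto (fun y => 1 / Real.cos y) (𝓝 0) (𝓝 (1 / Real.cos 0)) :=
    tendsto_const_nhds.div (Real.continuous_cos.tendsto 0) (by simp)
  have hnum : (fun y => (Real.sin y - y) - y * (Real.cos y - 1)) =O[𝓝 0] fun y => y ^ 3 :=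
    sin_sub_self_isBigO.sub
      (((isBigO_refl (fun y : ℝ => y) (𝓝 0)).mul cos_sub_one_isBigO).congr_right fun y => by ring)
  refine (hnum.mul (hcos.isBigO_one ℝ)).congr' ?_ (.of_forall fun y => mul_one _)
  filter_upwards [eventually_cos_ne_zero] with y hy
  rw [Real.tan_eq_sin_div_cos]
  field_simp
  ring

theorem tan_sq_sub_sq_isBigO : (fun y => Real.tan y ^ 2 - y ^ 2) =O[𝓝 0] fun y => y ^ 4 := by
  have hsum : (fun y => Real.tan y + y) =O[𝓝 0] fun y => y := by
    have hcube : (fun y : ℝ => y ^ 3) =O[𝓝 0] fun y => y :=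
      (isLittleO_pow_id (by norm_num)).isBigO
    exact ((tan_sub_self_isBigO.trans hcube).add ((isBigO_refl _ _).const_mul_left 2)).congr_left
      fun y => by ring
  exact (tan_sub_self_isBigO.mul hsum).congr (fun y => by ring) fun y => by ring

theorem cos_three_mul_div_cos_pow_three {y : ℝ} (hy : Real.cos y ≠ 0) :
    Real.cos (3 * y) / Real.cos y ^ 3 = 1 - 3 * Real.tan y ^ 2 := by
  rw [Real.cos_three_mul, Real.tan_eq_sin_div_cos]
  field_simp
  linarith [Real.sin_sq_add_cos_sq y]

theorem cos_three_mul_div_cos_pow_three_isBigO :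
    (fun y => Real.cos (3 * y) / Real.cos y ^ 3 - (1 - 3 * y ^ 2)) =O[𝓝 0] fun y => y ^ 4 := by
  refine (tan_sq_sub_sq_isBigO.const_mul_left (-3)).congr' ?_ .rfl
  filter_upwards [eventually_cos_ne_zero] with y hy
  rw [cos_three_mul_div_cos_pow_three hy]
  ring

/-! ### Analyticity of the Beta series -/

/-- The diagonal Beta value `B(z, z) = Γ(z)² / Γ(2z)` at a complex argument; it gives the analytic
continuation of `diagBeta`. -/
noncomputable def complexDiagBeta (z : ℂ) : ℂ := Complex.Gamma z ^ 2 / Complex.Gamma (2 * z)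

theorem complexDiagBeta_ofReal (u : ℝ) : complexDiagBeta u = diagBeta u := by
  rw [complexDiagBeta, diagBeta, ← Complex.ofReal_ofNat, ← Complex.ofReal_mul, Complex.Gamma_ofReal,
    Complex.Gamma_ofReal]
  push_cast
  rfl

theorem differentiableAt_complexDiagBeta {z : ℂ} (hz : 0 < z.re) :
    DifferentiableAt ℂ complexDiagBeta z := by
  have hΓ {s : ℂ} (hs : 0 < s.re) : DifferentiableAt ℂ Complex.Gamma s :=
    Complex.differentiableAt_Gamma s fun m h => by
      rw [h, Complex.neg_re, Complex.natCast_re, neg_pos] at hs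
      exact hs.not_ge m.cast_nonneg
  have hz2 : 0 < (2 * z).re := by simpa using hz
  exact ((hΓ hz).pow 2).div ((hΓ hz2).comp z (by fun_prop)) (Complex.Gamma_ne_zero_of_re_pos hz2)

theorem norm_complexDiagBeta_add_one_le {z : ℂ} (hz : 0 < z.re) :
    ‖complexDiagBeta (z + 1)‖ ≤ 1 / 4 * ‖complexDiagBeta z‖ := by
  have hz0 : z ≠ 0 := Complex.ne_zero_of_re_pos hz
  have hz1 : 2 * z + 1 ≠ 0 :=
    Complex.ne_zero_of_re_pos (by simpa using by positivity)
  have hstep : complexDiagBeta (z + 1) = 1 / 4 * (2 * z / (2 * z + 1)) * complexDiagBeta z := by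
    rw [complexDiagBeta, complexDiagBeta, show 2 * (z + 1) = 2 * z + 1 + 1 by ring,
      Complex.Gamma_add_one _ hz0, Complex.Gamma_add_one _ hz1,
      Complex.Gamma_add_one _ (mul_ne_zero two_ne_zero hz0)]
    field_simp
    norm_num
  have hle : ‖2 * z‖ ≤ ‖2 * z + 1‖ := by
    rw [← sq_le_sq₀ (norm_nonneg _) (norm_nonneg _), Complex.sq_norm, Complex.sq_norm,
      Complex.normSq_add, map_one, map_one, mul_one]
    linarith [show 0 < (2 * z).re by simpa using hz]
  rw [hstep, norm_mul, norm_mul, norm_div (2 * z)]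
  gcongr
  exact (mul_le_of_le_one_right (norm_nonneg _) (div_le_one_of_le₀ hle (norm_nonneg _))).trans_eq
    (by norm_num)

theorem norm_complexDiagBeta_add_natCast_le {z : ℂ} (hz : 0 < z.re) (n : ℕ) :
    ‖complexDiagBeta (z + n)‖ ≤ (1 / 4) ^ n * ‖complexDiagBeta z‖ := by
  have hgeom := le_geom (c := 1 / 4) (u := fun n : ℕ => ‖complexDiagBeta (z + n)‖) (by norm_num) n
    fun k _ => by
      have hk : 0 < (z + k).re := by
        rw [Complex.add_re, Complex.natCast_re]
        positivity
      simpa [add_assoc] using norm_complexDiagBeta_add_one_le hk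
  simpa using hgeom

theorem summable_add_mul_pow {r : ℝ} (hr : ‖r‖ < 1) (p q : ℝ) :
    Summable fun n : ℕ => (p * n + q) * r ^ n :=
  (((summable_pow_mul_geometric_of_norm_lt_one 1 hr).mul_left p).add
    ((summable_geometric_of_norm_lt_one hr).mul_left q)).congr fun n => by ring

theorem analyticAt_complexBetaSeries {u : ℝ} (hu : 0 < u) :
    AnalyticAt ℂ (fun z : ℂ => ∑' n : ℕ, (21 * (z + n) - 8) * complexDiagBeta (z + n) ^ 3) u := by
  have hre {z : ℂ} (hz : z ∈ Metric.closedBall (u : ℂ) (u / 2)) (n : ℕ) : 0 < (z + n).re := by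
    have h := (Complex.abs_re_le_norm (z - u)).trans (mem_closedBall_iff_norm.1 hz)
    rw [Complex.sub_re, Complex.ofReal_re, abs_le] at h
    rw [Complex.add_re, Complex.natCast_re]
    linarith [n.cast_nonneg (α := ℝ)]
  obtain ⟨C, hC⟩ := (isCompact_closedBall (u : ℂ) (u / 2)).exists_bound_of_continuousOn
    (f := complexDiagBeta) fun z hz => (differentiableAt_complexDiagBeta (by
      simpa using hre hz 0)).continuousAt.continuousWithinAt
  have hbound (n : ℕ) (z : ℂ) (hz : z ∈ Metric.ball (u : ℂ) (u / 2)) :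
      ‖(21 * (z + n) - 8) * complexDiagBeta (z + n) ^ 3‖ ≤
        (21 * n + (42 * u + 8)) * (1 / 64) ^ n * C ^ 3 := by
    have hz' := Metric.ball_subset_closedBall hz
    have hzu : ‖z‖ ≤ 2 * u := by
      have := norm_le_norm_add_norm_sub' z u
      rw [Complex.norm_of_nonneg hu.le] at this
      linarith [mem_closedBall_iff_norm.1 hz']
    have hlin : ‖21 * (z + n) - 8‖ ≤ 21 * n + (42 * u + 8) := by
      refine (norm_sub_le _ _).trans ?_
      rw [norm_mul, Complex.norm_ofNat, Complex.norm_ofNat]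
      linarith [norm_add_le z n, Complex.norm_natCast n]
    have hB : ‖complexDiagBeta (z + n)‖ ≤ (1 / 4) ^ n * C :=
      (norm_complexDiagBeta_add_natCast_le (by simpa using hre hz' 0) n).trans
        (by gcongr; exact hC z hz')
    rw [norm_mul, norm_pow]
    calc _ ≤ (21 * n + (42 * u + 8)) * ((1 / 4) ^ n * C) ^ 3 := by gcongr
      _ = _ := by
        rw [show (1 / 64 : ℝ) = (1 / 4) ^ 3 by norm_num, pow_right_comm]
        ring
  refine (Complex.differentiableOn_tsum_of_summable_norm ((summable_add_mul_pow (by norm_num) _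
    _).mul_right _) (fun n z hz => ?_) Metric.isOpen_ball hbound).analyticAt
      (Metric.ball_mem_nhds _ (by positivity))
  have hB := (differentiableAt_complexDiagBeta (hre (Metric.ball_subset_closedBall hz) n)).comp z
    (f := fun w : ℂ => w + n) (by fun_prop)
  exact (DifferentiableAt.mul (by fun_prop) (hB.pow 3)).differentiableWithinAt

theorem analyticAt_betaSeries {u : ℝ} (hu : 0 < u) : AnalyticAt ℝ betaSeries u := by
  refine (analyticAt_complexBetaSeries hu).re_ofReal.congr (.of_forall fun v => ?_)
  have hterm (n : ℕ) : (21 * ((v : ℂ) + n) - 8) * complexDiagBeta (v + n) ^ 3 =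
      (((21 * (v + n) - 8) * diagBeta (v + n) ^ 3 : ℝ) : ℂ) := by
    rw [← Complex.ofReal_natCast, ← Complex.ofReal_add, complexDiagBeta_ofReal]
    push_cast
    rfl
  simp only [hterm]
  rw [← Complex.ofReal_tsum, Complex.ofReal_re, betaSeries]

/-! ### The expansion -/

theorem diagBeta_half_add {y : ℝ} (hy : -(1 / 2) < y) :
    diagBeta (1 / 2 + y) = Real.pi * (2 ^ (-2 * y) * (pochG (1 / 2) y / pochG 1 y)) := by
  have hΓ₁ := Real.Gamma_pos_of_pos (show 0 < 1 / 2 + y by linarith)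
  have hΓ₂ := Real.Gamma_pos_of_pos (show 0 < 1 + y by linarith)
  have hΓ₃ := Real.Gamma_pos_of_pos (show 0 < 2 * (1 / 2 + y) by linarith)
  have hdup := Real.Gamma_mul_Gamma_add_half (1 / 2 + y)
  rw [show 1 / 2 + y + 1 / 2 = 1 + y by ring, show 1 - 2 * (1 / 2 + y) = -2 * y by ring] at hdup
  have := Real.sqrt_pos.2 Real.pi_pos
  rw [pochG, pochG, diagBeta, Real.Gamma_one, Real.Gamma_one_half_eq, div_one]
  nth_rw 1 [← Real.sq_sqrt Real.pi_pos.le]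
  generalize Real.Gamma (1 / 2 + y) = G₁, Real.Gamma (2 * (1 / 2 + y)) = G₃ at *
  rw [neg_mul] at hdup ⊢
  field_simp
  linear_combination hdup

theorem tsum_pochG_eq_betaSeries {x : ℝ} (hx : -(1 / 2) < x) :
    (1 / 16 : ℝ) * (∑' n : ℕ, (2 : ℝ) ^ (-(6 : ℝ) * ((n : ℝ) + x)) *
      (pochG (1 / 2) ((n : ℝ) + x) / pochG 1 ((n : ℝ) + x)) ^ 3 * (42 * ((n : ℝ) + x) + 5)) =
    betaSeries (1 / 2 + x) / (8 * Real.pi ^ 3) := by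
  rw [betaSeries, ← tsum_mul_left, ← tsum_div_const]
  refine tsum_congr fun n => ?_
  rw [add_assoc, add_comm x, diagBeta_half_add (hx.trans_le (le_add_of_nonneg_left n.cast_nonneg)),
    show (2 : ℝ) ^ (-(6 : ℝ) * (n + x)) = (2 ^ (-2 * (n + x))) ^ 3 by
      rw [← Real.rpow_mul_natCast two_pos.le]; ring_nf]
  have := Real.pi_pos
  field_simp
  ring

theorem tendsto_sin_mul_div (r : ℝ) : Tendsto (fun x => Real.sin (r * x) / x) (𝓝[≠] 0) (𝓝 r) := by
  have hderiv : HasDerivAt (fun x => Real.sin (r * x)) r 0 := by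
    simpa using ((hasDerivAt_id (0 : ℝ)).const_mul r).sin
  simpa [div_eq_inv_mul] using hderiv.tendsto_slope_zero

theorem tendsto_Gamma_half_add_pow_four_mul_div :
    Tendsto (fun x => Real.Gamma (1 / 2 + x) ^ 4 * Real.Gamma (1 / 2 - x) /
      Real.Gamma (2 * x + 1) ^ 2) (𝓝 0) (𝓝 (Real.pi ^ 2 * √Real.pi)) := by
  have hΓ {f : ℝ → ℝ} {s : ℝ} (hs : 0 < s) (hf : Tendsto f (𝓝 0) (𝓝 s)) :
      Tendsto (fun x => Real.Gamma (f x)) (𝓝 0) (𝓝 (Real.Gamma s)) :=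
    (continuousAt_Gamma_of_pos hs).tendsto.comp hf
  have h₁ : Tendsto (fun x => Real.Gamma (1 / 2 + x)) (𝓝 0) (𝓝 (Real.Gamma (1 / 2))) :=
    hΓ one_half_pos (Continuous.tendsto' (by fun_prop) _ _ (add_zero _))
  have h₂ : Tendsto (fun x => Real.Gamma (1 / 2 - x)) (𝓝 0) (𝓝 (Real.Gamma (1 / 2))) :=
    hΓ one_half_pos (Continuous.tendsto' (by fun_prop) _ _ (sub_zero _))
  have h₃ : Tendsto (fun x => Real.Gamma (2 * x + 1)) (𝓝 0) (𝓝 (Real.Gamma 1)) :=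
    hΓ one_pos (Continuous.tendsto' (by fun_prop) _ _ (by simp))
  have hlim := ((h₁.pow 4).mul h₂).div (h₃.pow 2) (by simp)
  rwa [Real.Gamma_one, one_pow, div_one, Real.Gamma_one_half_eq, show √Real.pi ^ 4 = Real.pi ^ 2 by
    rw [show 4 = 2 * 2 by norm_num, pow_mul, Real.sq_sqrt Real.pi_pos.le]] at hlim

theorem betaSeries_half_add_sub_div_eq {x : ℝ} (hx : 0 < x) (hx' : x < 1 / 6) :
    (betaSeries (1 / 2 + x) -
        8 * Real.pi ^ 2 * (Real.cos (Real.pi * (3 * x)) / Real.cos (Real.pi * x) ^ 3)) / x ^ 3 =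
      64 * (Real.Gamma (1 / 2 + x) ^ 4 * Real.Gamma (1 / 2 - x) / Real.Gamma (2 * x + 1) ^ 2) *
        (Real.sin (Real.pi * x) / x) *
          dougallSum (1 / 2 + x) (1 - 2 * x) (3 / 2 - x) (3 / 2 - x) := by
  have := Real.Gamma_pos_of_pos (show 0 < 2 * x by linarith)
  rw [betaSeries_eq_betaPotential (by linarith), betaPotential_half_add hx hx', add_sub_cancel_left,
    Real.Gamma_add_one (by positivity)]
  field_simp
  ring

theorem tendsto_betaSeries_half_add_sub_div :
    Tendsto (fun x => (betaSeries (1 / 2 + x) -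
      8 * Real.pi ^ 2 * (Real.cos (Real.pi * (3 * x)) / Real.cos (Real.pi * x) ^ 3)) / x ^ 3)
      (𝓝[>] 0) (𝓝 (8 * Real.pi ^ 3 * (64 * catalan'))) := by
  have hsum : Tendsto (fun x => dougallSum (1 / 2 + x) (1 - 2 * x) (3 / 2 - x) (3 / 2 - x)) (𝓝 0)
      (𝓝 (dougallSum (1 / 2) 1 (3 / 2) (3 / 2))) :=
    tendsto_dougallSum (Continuous.tendsto' (by fun_prop) _ _ (add_zero _))
      (Continuous.tendsto' (by fun_prop) _ _ (by simp))
      (Continuous.tendsto' (by fun_prop) _ _ (sub_zero _))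
      (Continuous.tendsto' (by fun_prop) _ _ (sub_zero _))
      (by norm_num) (by norm_num) (by norm_num) (by norm_num) (by norm_num)
  have hlim := (((tendsto_Gamma_half_add_pow_four_mul_div.mono_left
    nhdsWithin_le_nhds).const_mul 64).mul
    ((tendsto_sin_mul_div Real.pi).mono_left (nhdsGT_le_nhdsNE 0))).mul
    (hsum.mono_left nhdsWithin_le_nhds)
  have hval : 64 * (Real.pi ^ 2 * √Real.pi) * Real.pi * dougallSum (1 / 2) 1 (3 / 2) (3 / 2) =
      8 * Real.pi ^ 3 * (64 * catalan') := by
    have := Real.sqrt_pos.2 Real.pi_pos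
    rw [dougallSum_half_one_eq_catalan]
    field_simp
  rw [hval] at hlim
  refine hlim.congr' ?_
  filter_upwards [Ioo_mem_nhdsGT (show (0 : ℝ) < 1 / 6 by norm_num)] with x hx
  exact (betaSeries_half_add_sub_div_eq hx.1 hx.2).symm

theorem cos_pi_mul_three_mul_div_cos_pow_three_isBigO :
    (fun x => 8 * Real.pi ^ 2 * (Real.cos (Real.pi * (3 * x)) / Real.cos (Real.pi * x) ^ 3) -
      8 * Real.pi ^ 3 * (1 / Real.pi - 3 * Real.pi * x ^ 2)) =O[𝓝 0] fun x => x ^ 4 := by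
  have hpi : Tendsto (fun x => Real.pi * x) (𝓝 0) (𝓝 0) :=
    Continuous.tendsto' (by fun_prop) 0 0 (mul_zero _)
  refine ((cos_three_mul_div_cos_pow_three_isBigO.comp_tendsto hpi).const_mul_left
    (8 * Real.pi ^ 2)).congr_left (fun x => ?_) |>.trans ?_
  · have := Real.pi_pos
    simp only [Function.comp_apply, mul_left_comm (3 : ℝ)]
    field_simp
  · exact ((isBigO_refl (fun x : ℝ => x ^ 4) _).const_mul_left (Real.pi ^ 4)).congr_left fun x => by
      simp only [Function.comp_apply, mul_pow]

theorem betaSeries_half_add_isBigO :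
    (fun x => betaSeries (1 / 2 + x) - 8 * Real.pi ^ 3 *
      (1 / Real.pi - 3 * Real.pi * x ^ 2 + 64 * catalan' * x ^ 3)) =O[𝓝 0] fun x => x ^ 4 := by
  have hbeta : AnalyticAt ℝ (fun x => betaSeries (1 / 2 + x)) 0 :=
    AnalyticAt.fun_comp (by simpa using analyticAt_betaSeries one_half_pos) (by fun_prop)
  have htrig : AnalyticAt ℝ (fun x => 8 * Real.pi ^ 2 *
      (Real.cos (Real.pi * (3 * x)) / Real.cos (Real.pi * x) ^ 3)) 0 :=
    analyticAt_const.mul (AnalyticAt.div (by fun_prop) (by fun_prop) (by simp))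
  refine ((isBigO_sub_const_mul_pow_of_tendsto_div (hbeta.sub htrig) (nhdsGT_le_nhdsNE 0)
    tendsto_betaSeries_half_add_sub_div).add
      cos_pi_mul_three_mul_div_cos_pow_three_isBigO).congr_left fun x => ?_
  rw [Pi.sub_apply]
  ring

/-- As `x → 0`,
`(1/16) ∑_{n≥0} 2^{-6(n+x)} ((1/2)_{n+x}/(1)_{n+x})³ (42(n+x)+5)
 = 1/π - 3π x² + 64 G x³ + O(x⁴)`. -/
theorem identity2_expansion :
    (fun x : ℝ =>
      (1/16 : ℝ) * (∑' n : ℕ,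
          (2 : ℝ) ^ (-(6 : ℝ) * ((n : ℝ) + x)) *
            (pochG (1/2) ((n : ℝ) + x) / pochG 1 ((n : ℝ) + x)) ^ 3 *
            (42 * ((n : ℝ) + x) + 5))
        - (1 / Real.pi - 3 * Real.pi * x ^ 2 + 64 * catalan' * x ^ 3))
      =O[nhds 0] (fun x : ℝ => x ^ 4) := by
  refine (betaSeries_half_add_isBigO.const_mul_left (8 * Real.pi ^ 3)⁻¹).congr' ?_ .rfl
  filter_upwards [eventually_gt_nhds (show -(1 / 2) < (0 : ℝ) by norm_num)] with x hx
  have := Real.pi_pos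
  rw [tsum_pochG_eq_betaSeries hx]
  field_simp
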